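/- arXiv:2401.00762 — 5 statements merged into one kernel-verified Lean document; each statement's English description precedes it below -/
import Mathlib

section
/- Let K be an algebraically closed field of characteristic zero and let f₁,…,fₙ ∈ K(x) be rational functions, each written in lowest terms fᵢ = pᵢ/qᵢ with pᵢ, qᵢ ∈ K[x] coprime and qᵢ monic, and let q be the monic least common denominator of f₁,…,fₙ. If there exists a non-constant rational function s ∈ K(z) such that every composition fᵢ(s) = pᵢ(s)/qᵢ(s) is a polynomial (lies in the image of K[z] in K(z)), then q has at most one root in K, i.e., q = (x−b)^m for some b ∈ K and m ∈ ℕ. (Converse direction of Lemma 3.4.) -/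
/-!
Write `s = a / d` in lowest terms. If `β` is a root of some `qᵢ`, then `s` never takes the
value `β` at a finite point, since `fᵢ(s)` would have a pole there; equivalently `a - β d` is a
nonzero constant. Algebraically: a Bézout relation `u pᵢ + v qᵢ = 1` together with
`pᵢ(s) = P qᵢ(s)` makes `qᵢ(s)`, hence `s - β`, invertible in `K[z][1/d]`, so `a - β d` divides
a power of `d`, to which it is coprime (`isUnit_num_sub_of_root`).

Two distinct such values `β, γ` would make both `a - β d` and `a - γ d` constant, hence `d`, `a`
and `s` constant. Every root of the least common multiple `Q` is a root of some `qᵢ`, so `Q` has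
at most one root and, as `K` is algebraically closed, it is a power of a linear polynomial.
-/

open Polynomial

/-- A polynomial in `s` becomes a polynomial in `z` after multiplication by a power of the
denominator of `s`. -/
lemma exists_aeval_mul_denom_pow {K : Type*} [Field K] (s : RatFunc K) (r : Polynomial K) :
    ∃ (N : ℕ) (R : Polynomial K), aeval s r * algebraMap (Polynomial K) (RatFunc K) s.denom ^ N
      = algebraMap (Polynomial K) (RatFunc K) R := by
  have hd : algebraMap (Polynomial K) (RatFunc K) s.denom ≠ 0 :=
    RatFunc.algebraMap_ne_zero s.denom_ne_zero
  have hsd : s * algebraMap (Polynomial K) (RatFunc K) s.denom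
      = algebraMap (Polynomial K) (RatFunc K) s.num :=
    ((div_eq_iff hd).1 (RatFunc.num_div_denom s)).symm
  induction r using Polynomial.induction_on' with
  | add f g hf hg =>
    obtain ⟨N, R, h⟩ := hf
    obtain ⟨M, T, h'⟩ := hg
    refine ⟨N + M, R * s.denom ^ M + T * s.denom ^ N, ?_⟩
    simp only [map_add, map_mul, map_pow, ← h, ← h']
    ring
  | monomial k c =>
    refine ⟨k, C c * s.num ^ k, ?_⟩
    rw [aeval_monomial, mul_assoc, ← mul_pow, hsd, map_mul, map_pow]
    rfl

/-- If `p(s) = P q(s)` with `p, q` coprime, then `s` omits every root `β` of `q` as a value: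
the numerator of `s - β` is constant. -/
lemma isUnit_num_sub_of_root {K : Type*} [Field K] (s : RatFunc K) (p q P : Polynomial K)
    (hcop : IsCoprime p q)
    (hP : aeval s p = algebraMap (Polynomial K) (RatFunc K) P * aeval s q)
    (β : K) (hβ : q.IsRoot β) : IsUnit (s.num - C β * s.denom) := by
  obtain ⟨g, rfl⟩ := dvd_iff_isRoot.2 hβ
  obtain ⟨u, v, huv⟩ := hcop
  obtain ⟨N, G, hG⟩ := exists_aeval_mul_denom_pow s g
  obtain ⟨M, U, hU⟩ := exists_aeval_mul_denom_pow s u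
  obtain ⟨L, V, hV⟩ := exists_aeval_mul_denom_pow s v
  have hinj := RatFunc.algebraMap_injective K
  have hd : algebraMap (Polynomial K) (RatFunc K) s.denom ≠ 0 :=
    RatFunc.algebraMap_ne_zero s.denom_ne_zero
  have hsd := (div_eq_iff hd).1 (RatFunc.num_div_denom s)
  have h1 := congrArg (aeval s) huv
  have hC : aeval s (C β) = algebraMap (Polynomial K) (RatFunc K) (C β) := by
    rw [aeval_C]; rfl
  simp only [map_add, map_mul, hP, map_one, map_sub, aeval_X, hC] at h1
  have key : (s.num - C β * s.denom) * (G * (U * P * s.denom ^ L + V * s.denom ^ M))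
      = s.denom ^ (1 + N + M + L) := by
    apply hinj
    simp only [map_add, map_mul, map_sub, map_pow, ← hG, ← hU, ← hV, hsd]
    linear_combination
      (algebraMap (Polynomial K) (RatFunc K) s.denom) ^ (1 + N + M + L) * h1
  have hc : IsCoprime (s.num - C β * s.denom) s.denom := by
    have := (RatFunc.isCoprime_num_denom s).add_mul_right_left (-C β)
    rwa [neg_mul, ← sub_eq_add_neg] at this
  exact hc.pow_right.isUnit_of_dvd' dvd_rfl (Dvd.intro _ key)

/-- **Lemma 3.4, converse direction.** Let `K` be algebraically closed of characteristic
zero and let `fᵢ = pᵢ/qᵢ ∈ K(x)` be rational functions in lowest terms (`pᵢ, qᵢ` coprime,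
`qᵢ` monic), with monic least common denominator `Q`. If there exists a non-constant
rational function `s ∈ K(z)` such that every composition `fᵢ(s) = pᵢ(s)/qᵢ(s)` is a
polynomial (lies in the image of `K[z]` in `K(z)`), then `Q = (x - b)^m` for some
`b ∈ K` and `m ∈ ℕ`. -/
theorem lcd_pow_linear_of_comp_polynomial {K : Type*} [Field K] [IsAlgClosed K] [CharZero K]
    {n : ℕ} (p q : Fin n → Polynomial K)
    (hcop : ∀ i, IsCoprime (p i) (q i)) (hmon : ∀ i, (q i).Monic)
    (Q : Polynomial K) (hQmon : Q.Monic)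
    -- `Q` is the least common multiple of the denominators `qᵢ`:
    (hQdvd : ∀ i, q i ∣ Q) (hQmin : ∀ r : Polynomial K, (∀ i, q i ∣ r) → Q ∣ r)
    (s : RatFunc K) (hs : s ∉ Set.range (RatFunc.C : K →+* RatFunc K))
    (hpoly : ∀ i, Polynomial.aeval s (p i) / Polynomial.aeval s (q i) ∈
      (algebraMap (Polynomial K) (RatFunc K)).range) :
    ∃ (b : K) (m : ℕ), Q = (X - C b) ^ m := by
  have hne : ∀ r : Polynomial K, r ≠ 0 → aeval s r ≠ 0 := by
    intro r hr h0
    have hint : IsIntegral K s := (show IsAlgebraic K s from ⟨r, hr, h0⟩).isIntegral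
    obtain ⟨c, hc⟩ := IsAlgClosed.exists_root (minpoly K s) (minpoly.degree_pos hint).ne'
    have := minpoly.root hint hc
    exact hs ⟨c, this⟩
  have hunit : ∀ β, Q.IsRoot β → IsUnit (s.num - C β * s.denom) := by
    intro β hβ
    have hex : ∃ i, (q i).IsRoot β := by
      by_contra! hno
      obtain ⟨R, hR⟩ := dvd_iff_isRoot.2 hβ
      -- If no `qᵢ` vanishes at `β`, then `Q / (X - β)` is already a common multiple.
      have hQR : Q ∣ R := hQmin R fun i => by
        have hc : IsCoprime (X - C β) (q i) :=
          (irreducible_X_sub_C β).coprime_iff_not_dvd.2 fun h => hno i (dvd_iff_isRoot.1 h)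
        exact hc.symm.dvd_of_dvd_mul_left (hR ▸ hQdvd i)
      have hR0 : R ≠ 0 := by
        rintro rfl
        exact hQmon.ne_zero (by simpa using hR)
      have h1 := natDegree_le_of_dvd hQR hR0
      rw [hR, natDegree_mul (X_sub_C_ne_zero β) hR0, natDegree_X_sub_C] at h1
      omega
    obtain ⟨i, hi⟩ := hex
    obtain ⟨P, hP⟩ := hpoly i
    exact isUnit_num_sub_of_root s (p i) (q i) P (hcop i)
      ((div_eq_iff (hne _ (hmon i).ne_zero)).1 hP.symm) β hi
  have huniq : ∀ β γ, Q.IsRoot β → Q.IsRoot γ → β = γ := by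
    intro β γ hβ hγ
    by_contra hne'
    obtain ⟨c, -, hc⟩ := Polynomial.isUnit_iff.1 (hunit β hβ)
    obtain ⟨e, -, he⟩ := Polynomial.isUnit_iff.1 (hunit γ hγ)
    have hsub : γ - β ≠ 0 := sub_ne_zero.2 (Ne.symm hne')
    have hd : s.denom = C ((γ - β)⁻¹ * (c - e)) := by
      have h1 : C (γ - β) * s.denom = C (c - e) := by
        rw [C_sub, C_sub, hc, he]; ring
      rw [C_mul, ← h1, ← mul_assoc, ← C_mul, inv_mul_cancel₀ hsub, C_1, one_mul]
    have ha : s.num = C (c + β * ((γ - β)⁻¹ * (c - e))) := by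
      rw [C_add, C_mul, ← hd, hc]; ring
    apply hs
    refine ⟨(c + β * ((γ - β)⁻¹ * (c - e))) / ((γ - β)⁻¹ * (c - e)), ?_⟩
    rw [← RatFunc.num_div_denom s, ha, hd, RatFunc.algebraMap_C, RatFunc.algebraMap_C, map_div₀]
  have hprod := (IsAlgClosed.splits Q).eq_prod_roots_of_monic hQmon
  by_cases h : ∃ b, Q.IsRoot b
  · obtain ⟨b, hb⟩ := h
    refine ⟨b, Multiset.card Q.roots, ?_⟩
    have hrep : Q.roots = Multiset.replicate (Multiset.card Q.roots) b :=
      Multiset.eq_replicate_card.2 fun r hr => huniq r b (isRoot_of_mem_roots hr) hb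
    rw [hrep] at hprod
    simpa using hprod
  · have h0 : Q.roots = 0 := Multiset.eq_zero_of_forall_notMem fun r hr =>
      h ⟨r, isRoot_of_mem_roots hr⟩
    refine ⟨0, 0, ?_⟩
    rw [h0] at hprod
    simpa using hprod
end

section
/- Let K be an algebraically closed field of characteristic zero, let p, q ∈ K[x] be coprime polynomials with p ≠ 0 and q non-constant, and let s ∈ K[z] be a non-constant polynomial. Then the product q(s)·s′ (where s′ is the formal derivative of s) does not divide p(s) in K[z]; equivalently, the rational function p(s)/(q(s)·s′) ∈ K(z) is not a polynomial. (This is the key divisibility step in the proofs of Proposition 3.5 and Theorem 3.6: if a(s)/s′ is a polynomial for a rational function a = p/q in lowest terms and a non-constant polynomial s, then a must itself be a polynomial.) -/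
open Polynomial

/-- **Key divisibility step in Propositions 3.5 and Theorem 3.6.** Let `K` be an
algebraically closed field of characteristic zero, let `p, q ∈ K[x]` be coprime with
`p ≠ 0` and `q` non-constant, and let `s ∈ K[z]` be non-constant. Then `q(s)·s′` does
not divide `p(s)` in `K[z]` (equivalently, `p(s)/(q(s)·s′)` is not a polynomial). -/
theorem not_dvd_comp_mul_derivative {K : Type*} [Field K] [IsAlgClosed K] [CharZero K]
    (p q s : Polynomial K)
    (hcop : IsCoprime p q) (hp : p ≠ 0) (hq : 0 < q.natDegree) (hs : 0 < s.natDegree) :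
    ¬ (q.comp s * Polynomial.derivative s ∣ p.comp s) := by
  intro hdvd
  -- Coprimality survives composition with `s`, so `q(s) ∣ p(s)` makes `q(s)` a unit,
  -- although its degree `deg q * deg s` is positive.
  have hcop_s : IsCoprime (p.comp s) (q.comp s) := by
    simpa using hcop.map (Polynomial.compRingHom s)
  have hunit : IsUnit (q.comp s) :=
    hcop_s.isUnit_of_dvd' (dvd_of_mul_right_dvd hdvd) dvd_rfl
  have hdeg := Polynomial.natDegree_eq_zero_of_isUnit hunit
  rw [Polynomial.natDegree_comp] at hdeg
  exact (Nat.mul_pos hq hs).ne' hdeg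
end

section
/- Theorem 3.6 (observable polynomial realizations). Fix an irreducible polynomial F ∈ K[u,u₁,y,y₁] with positive degree in y₁, over an algebraically closed field K of characteristic zero. If F admits a polynomial realization, then F admits an observable polynomial realization, i.e., a pair (f,g) ∈ K[u,x]×K[u,x] with ∂g/∂x ≠ 0 such that F(u,u₁,g,L_f(g)) = 0 in K(u,u₁,x) and the subfield of K(u,u₁,x) generated over K by u, u₁, g and L_f(g) is the whole field K(u,u₁,x). -/
/-!
Let `(f, g)` be a polynomial realization of `F` and put `E = K(u, u₁, g, L_f(g)) ⊆ L`.

*Derivations preserving `E`.*  As `∂g/∂x ≠ 0`, the field `L` is algebraic over `K(u, u₁, g)`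
(`isAlgebraic_of_Dx_ne_zero`).  In characteristic zero the value of a derivation at an algebraic
element is determined rationally by its values on the base field
(`derivation_mem_of_isAlgebraic`), so every `K`-derivation of `L` sending `u, u₁, g` into `E`
preserves `E`.  This applies to `∂/∂u₁` and to the total derivative `f ∂/∂x + u₁ ∂/∂u`, hence to
their commutator, which is `∂/∂u` because `f` does not involve `u₁`.  So `E` is stable under
`∂/∂u` and under `f ∂/∂x` (`Du_mem_and_fDx_mem`).

*Coefficients.*  By stability under `∂/∂u`, if an element of `K[u, x]` lies in `E`, so do all its
coefficients as a polynomial in `u` (`coeff_mem_of_evUX_mem`).  Some coefficient of `g` is a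
nonconstant polynomial in `x`, so `E ∩ K[x]` is not reduced to `K`.

*Polynomial Lüroth.*  If `E ∩ K[x] ≠ K`, then `E ∩ K[x] = K[h]` for some nonconstant `h ∈ K[x]`
(`exists_luroth_generator`).  Applying this to the coefficients of `g` and of `f ∂h/∂x`, both
of which lie in `E`, gives `g = G(u, h)` and `f ∂h/∂x = R(u, h)` with `R, G ∈ K[u, x]`.

*Conclusion.*  Let `σ` be the endomorphism of `L` fixing `u, u₁` and sending `x` to `h`.  By the
chain rule `σ(L_R(G)) = L_f(g)`, so `(R, G)` is again a polynomial realization of `F`, and `σ`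
maps `K(u, u₁, G, L_R(G))` onto `E`.  Since `σ(x) = h ∈ E` and `σ` is injective, `x` lies in
`K(u, u₁, G, L_R(G))`, i.e. `(R, G)` is observable.
-/

noncomputable section

open MvPolynomial

/-! ## Setup

The field `L = K(u,u₁,x)` is realized as the fraction field of the polynomial ring
`K[u,u₁,x]` in three variables (`0 ↦ u`, `1 ↦ u₁`, `2 ↦ x`); `u₁` plays the role of
the derivative `u′` of the input `u`.  The partial derivatives `∂/∂x` and `∂/∂u` on
`K[u,x]` extend uniquely to derivations of `K(u,x)` (indeed of all of `L`, killing
`u₁` resp. fixing it); below they are taken as data `Dx, Du : Derivation K L L`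
characterized by their values on the generators `u, u₁, x`. -/

/-- The field `L = K(u,u₁,x)`. -/
abbrev LL (K : Type) [Field K] := FractionRing (MvPolynomial (Fin 3) K)

variable (K : Type) [Field K]

/-- The input variable `u` as an element of `L`. -/
def uL : LL K := algebraMap (MvPolynomial (Fin 3) K) (LL K) (X 0)

/-- The variable `u₁` (the derivative `u′` of the input) as an element of `L`. -/
def u₁L : LL K := algebraMap (MvPolynomial (Fin 3) K) (LL K) (X 1)

/-- The state variable `x` as an element of `L`. -/
def xL : LL K := algebraMap (MvPolynomial (Fin 3) K) (LL K) (X 2)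

/-- The subfield `K(u,x)` of `L`. -/
def Kux : IntermediateField K (LL K) := IntermediateField.adjoin K {uL K, xL K}

/-- The subring `K[u,x]` of `L`. -/
def KpolyUX : Subalgebra K (LL K) := Algebra.adjoin K {uL K, xL K}

/-- The subring `K(u,u₁)[x]` of `L`: elements that are polynomial in `x` with
coefficients in the subfield `K(u,u₁)`. -/
def KUU₁X : Subring (LL K) :=
  Subring.closure ((IntermediateField.adjoin K {uL K, u₁L K} : Set (LL K)) ∪ {xL K})

variable {K}

/-- The Lie derivative `L_f(g) = (∂g/∂x)·f + (∂g/∂u)·u₁ ∈ L`. -/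
def lieD (Dx Du : Derivation K (LL K) (LL K)) (f g : LL K) : LL K :=
  Dx g * f + Du g * u₁L K

/-- `(f,g)` is a rational realization of the IO-equation `F ∈ K[u,u₁,y,y₁]`
(variables of `F`: `0 ↦ u`, `1 ↦ u₁`, `2 ↦ y`, `3 ↦ y₁`): `f, g ∈ K(u,x)`,
`∂g/∂x ≠ 0`, and `F(u,u₁,g,L_f(g)) = 0` in `L`.  It encodes the ODE system
`x′ = f(u,x)`, `y = g(u,x)` having `F` as its input–output equation. -/
def IsRealization (Dx Du : Derivation K (LL K) (LL K)) (F : MvPolynomial (Fin 4) K)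
    (f g : LL K) : Prop :=
  f ∈ Kux K ∧ g ∈ Kux K ∧ Dx g ≠ 0 ∧
    MvPolynomial.aeval ![uL K, u₁L K, g, lieD Dx Du f g] F = 0

/-- `(f,g)` is a polynomial realization of `F`: a realization with `f, g ∈ K[u,x]`. -/
def IsPolyRealization (Dx Du : Derivation K (LL K) (LL K)) (F : MvPolynomial (Fin 4) K)
    (f g : LL K) : Prop :=
  IsRealization Dx Du F f g ∧ f ∈ KpolyUX K ∧ g ∈ KpolyUX K

/-- A realization `(f,g)` is observable if the subfield `K(u,u₁,g,L_f(g))` of `L`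
generated over `K` by `u`, `u₁`, `g` and `L_f(g)` is the whole field `L`. -/
def IsObservable (Dx Du : Derivation K (LL K) (LL K)) (f g : LL K) : Prop :=
  IntermediateField.adjoin K {uL K, u₁L K, g, lieD Dx Du f g} = ⊤

/-! ### Polynomial Lüroth -/

theorem coeff_swap (R : Polynomial (Polynomial K)) (a b : ℕ) :
    ((Polynomial.Bivariate.swap R).coeff a).coeff b = (R.coeff b).coeff a := by
  induction R using Polynomial.induction_on' with
  | add p q hp hq => simp [hp, hq]
  | monomial n p =>
    induction p using Polynomial.induction_on' with
    | add p q hp hq => simp only [map_add, Polynomial.coeff_add, hp, hq]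
    | monomial m r =>
      rw [Polynomial.Bivariate.swap_monomial_monomial]
      simp only [Polynomial.coeff_monomial]
      split_ifs <;> simp_all [Polynomial.coeff_monomial]

/-- Let `h(X)` be a nonconstant coefficient of `P(X, T)`, seen as a polynomial in `T`.  If `P`
divides `h(T) - h(X)`, then `h(T) - h(X)` divides `P`.  Indeed both have degree `deg h` in `X`, so
the cofactor is free of `X`; comparing coefficients of `X ^ deg h` shows that it is a constant. -/
theorem sub_dvd_of_dvd_sub {P : Polynomial (Polynomial K)} {i : ℕ}
    (hpos : 0 < (P.coeff i).natDegree)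
    (hdvd : P ∣ (P.coeff i).map Polynomial.C - Polynomial.C (P.coeff i)) :
    (P.coeff i).map Polynomial.C - Polynomial.C (P.coeff i) ∣ P := by
  obtain ⟨Q, hQ⟩ := hdvd
  set h := P.coeff i with hh
  have hh0 : h ≠ 0 := by rintro h0; simp [h0] at hpos
  have hs : Polynomial.C h - h.map Polynomial.C
      = Polynomial.Bivariate.swap P * Polynomial.Bivariate.swap Q := by
    rw [← map_mul, ← hQ, map_sub, Polynomial.Bivariate.swap_map_C, Polynomial.Bivariate.swap_C]
  have hne : Polynomial.C h - h.map Polynomial.C ≠ 0 := by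
    intro h0
    have := congrArg (fun R => (Polynomial.coeff R h.natDegree).coeff 0) h0
    simp [Polynomial.coeff_C, hpos.ne'] at this
    exact hh0 this
  have hP0 : Polynomial.Bivariate.swap P ≠ 0 := by rintro h0; simp [h0] at hs; exact hne hs
  have hQ0 : Polynomial.Bivariate.swap Q ≠ 0 := by rintro h0; simp [h0] at hs; exact hne hs
  -- exchanging the variables turns the degree in `X` into the outer `natDegree`
  have hdeg : h.natDegree ≤ (Polynomial.Bivariate.swap P).natDegree := by
    apply Polynomial.le_natDegree_of_ne_zero
    intro h0
    have := congrArg (fun R => Polynomial.coeff R i) h0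
    simp only [coeff_swap, ← hh, Polynomial.coeff_zero, Polynomial.coeff_natDegree] at this
    exact hh0 (Polynomial.leadingCoeff_eq_zero.mp this)
  have hdl : (Polynomial.C h - h.map Polynomial.C).natDegree ≤ h.natDegree := by
    refine (Polynomial.natDegree_sub_le _ _).trans ?_
    simp
  have hQd : (Polynomial.Bivariate.swap Q).natDegree = 0 := by
    rw [hs, Polynomial.natDegree_mul hP0 hQ0] at hdl
    omega
  obtain ⟨q, hq⟩ := Polynomial.natDegree_eq_zero.mp hQd
  have hu : IsUnit q := by
    have := congrArg (fun R => Polynomial.coeff R h.natDegree) hs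
    simp only [← hq, Polynomial.coeff_mul_C, Polynomial.coeff_sub, Polynomial.coeff_map,
      Polynomial.coeff_C, hpos.ne', if_false, zero_sub] at this
    refine isUnit_of_dvd_unit (Dvd.intro_left _ this.symm) ?_
    simpa [hpos.ne'] using hh0
  have hQu : IsUnit Q := by
    have : IsUnit (Polynomial.Bivariate.swap Q) := by
      rw [← hq]; exact hu.map Polynomial.C
    simpa using this
  rw [hQ]
  exact hQu.mul_right_dvd.mpr dvd_rfl

/-- If `h(T) - h(X)` divides `a(T) - a(X)` for every polynomial `a` in the subfield `E ∋ h` of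
`K(X)`, then every such `a` is a polynomial in `h`.  Setting `X = 0` shows that `h - h(0)` divides
`a - a(0)`; the quotient lies in `E` and has smaller degree, and induction applies. -/
theorem exists_comp_of_sub_dvd (E : IntermediateField K (RatFunc K)) {h : Polynomial K}
    (hpos : 0 < h.natDegree) (hE : algebraMap (Polynomial K) (RatFunc K) h ∈ E)
    (hdvd : ∀ a : Polynomial K, algebraMap (Polynomial K) (RatFunc K) a ∈ E →
      h.map Polynomial.C - Polynomial.C h ∣ a.map Polynomial.C - Polynomial.C a)
    (n : ℕ) (a : Polynomial K) (hn : a.natDegree < n)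
    (ha : algebraMap (Polynomial K) (RatFunc K) a ∈ E) :
    ∃ q : Polynomial K, a = q.comp h := by
  induction n generalizing a with
  | zero => omega
  | succ n ih =>
    obtain ⟨Q, hQ⟩ := hdvd a ha
    have h1 := congrArg (Polynomial.map (Polynomial.evalRingHom (0 : K))) hQ
    have hid : (Polynomial.evalRingHom (0 : K)).comp Polynomial.C = RingHom.id K := by
      ext; simp
    simp only [Polynomial.map_sub, Polynomial.map_mul, Polynomial.map_map, hid, Polynomial.map_id,
      Polynomial.map_C, Polynomial.coe_evalRingHom] at h1
    set s := Q.map (Polynomial.evalRingHom (0 : K)) with hs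
    have hne : h - Polynomial.C (h.eval 0) ≠ 0 := by
      intro h0
      rw [sub_eq_zero.mp h0] at hpos
      simp at hpos
    by_cases hs0 : s = 0
    · rw [hs0, mul_zero, sub_eq_zero] at h1
      exact ⟨Polynomial.C (a.eval 0), by rw [Polynomial.C_comp]; exact h1⟩
    have hdeg : s.natDegree < n := by
      have h2 := congrArg Polynomial.natDegree h1
      rw [Polynomial.natDegree_mul hne hs0, Polynomial.natDegree_sub_C,
        Polynomial.natDegree_sub_C] at h2
      omega
    have hC : ∀ c : K, algebraMap (Polynomial K) (RatFunc K) (Polynomial.C c) ∈ E :=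
      fun c => E.algebraMap_mem c
    have hsE : algebraMap (Polynomial K) (RatFunc K) s ∈ E := by
      have hne' : algebraMap (Polynomial K) (RatFunc K) (h - Polynomial.C (h.eval 0)) ≠ 0 := by
        rwa [Ne, IsFractionRing.to_map_eq_zero_iff]
      have h2 : algebraMap (Polynomial K) (RatFunc K) s =
          algebraMap (Polynomial K) (RatFunc K) (a - Polynomial.C (a.eval 0)) /
          algebraMap (Polynomial K) (RatFunc K) (h - Polynomial.C (h.eval 0)) := by
        rw [h1, map_mul, mul_div_cancel_left₀ _ hne']
      rw [h2, map_sub, map_sub]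
      exact div_mem (sub_mem ha (hC _)) (sub_mem hE (hC _))
    obtain ⟨q, hq⟩ := ih s hdeg hsE
    refine ⟨(Polynomial.X - Polynomial.C (h.eval 0)) * q + Polynomial.C (a.eval 0), ?_⟩
    rw [Polynomial.add_comp, Polynomial.mul_comp, Polynomial.sub_comp, Polynomial.X_comp,
      Polynomial.C_comp, Polynomial.C_comp, ← hq, ← h1, sub_add_cancel]

/-- Polynomial form of Lüroth's theorem: if a field `E` between `K` and `K(X)` contains a
nonconstant polynomial, then `E ∩ K[X] = K[h]` for some nonconstant polynomial `h`.  By Gauss's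
lemma the minimal polynomial of `X` over `E` has coefficients in `K[X]`, and any nonconstant one
among them can serve as `h`. -/
theorem exists_luroth_generator (E : IntermediateField K (RatFunc K)) {b : Polynomial K}
    (hb : 0 < b.natDegree) (hbE : algebraMap (Polynomial K) (RatFunc K) b ∈ E) :
    ∃ h : Polynomial K, 0 < h.natDegree ∧ algebraMap (Polynomial K) (RatFunc K) h ∈ E ∧
      ∀ a : Polynomial K, algebraMap (Polynomial K) (RatFunc K) a ∈ E →
        ∃ q : Polynomial K, a = q.comp h := by
  set ι := algebraMap (Polynomial K) (RatFunc K) with hι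
  have hιinj : Function.Injective ι := IsFractionRing.injective _ _
  set p := minpoly E (RatFunc.X : RatFunc K) with hp
  -- every `a ∈ E ∩ K[X]` yields a polynomial `a(T) - a(X)` over `E` with root `X`
  have hdvd : ∀ a : Polynomial K, ι a ∈ E →
      p.map (algebraMap E (RatFunc K)) ∣ (a.map Polynomial.C - Polynomial.C a).map ι := by
    intro a ha
    have h1 : p ∣ a.map (algebraMap K E) - Polynomial.C ⟨ι a, ha⟩ := by
      apply minpoly.dvd
      simp only [map_sub, Polynomial.aeval_map_algebraMap, Polynomial.aeval_C]
      rw [sub_eq_zero, ← RatFunc.algebraMap_X, Polynomial.aeval_algebraMap_apply]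
      simp [hι]
    have h2 := Polynomial.map_dvd (algebraMap E (RatFunc K)) h1
    convert h2 using 1
    simp only [Polynomial.map_sub, Polynomial.map_map, Polynomial.map_C]
    congr 1
  have hmon : ∀ c : Polynomial K, 0 < c.natDegree → c.Monic →
      (c.map Polynomial.C - Polynomial.C c : Polynomial (Polynomial K)).Monic := by
    intro c hc hm
    refine (hm.map _).sub_of_left ?_
    refine Polynomial.degree_C_le.trans_lt ?_
    rw [Polynomial.degree_map_eq_of_injective Polynomial.C_injective]
    exact Polynomial.natDegree_pos_iff_degree_pos.mp hc
  -- some `b(T) - b(X)` with `b` monic is monic over `K[X]` and divisible by `p`, so by the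
  -- lemma of Gauss `p` has coefficients in `K[X]`
  obtain ⟨P, hP⟩ : ∃ P : Polynomial (Polynomial K),
      P.Monic ∧ P.map ι = p.map (algebraMap E (RatFunc K)) := by
    have hb0 : b ≠ 0 := by rintro rfl; simp at hb
    set b' := b * Polynomial.C b.leadingCoeff⁻¹ with hb'
    have hm : b'.Monic := Polynomial.monic_mul_leadingCoeff_inv hb0
    have hd : 0 < b'.natDegree := by
      rwa [hb', Polynomial.natDegree_mul_C (inv_ne_zero (by simpa using hb0))]
    have hb'E : ι b' ∈ E := by
      rw [hb', map_mul]
      exact mul_mem hbE (E.algebraMap_mem _)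
    have hint : IsIntegral E (RatFunc.X : RatFunc K) := by
      refine IsAlgebraic.isIntegral ⟨b'.map (algebraMap K E) - Polynomial.C ⟨ι b', hb'E⟩, ?_, ?_⟩
      · apply Polynomial.Monic.ne_zero
        refine (hm.map _).sub_of_left ?_
        refine Polynomial.degree_C_le.trans_lt ?_
        rw [Polynomial.degree_map]
        exact Polynomial.natDegree_pos_iff_degree_pos.mp hd
      · simp only [map_sub, Polynomial.aeval_map_algebraMap, Polynomial.aeval_C]
        rw [sub_eq_zero, ← RatFunc.algebraMap_X, Polynomial.aeval_algebraMap_apply]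
        simp [hι]
    obtain ⟨P, hP⟩ := IsIntegrallyClosed.eq_map_mul_C_of_dvd (RatFunc K) (hmon b' hd hm)
      (hdvd b' hb'E)
    have hpm : (p.map (algebraMap E (RatFunc K))).Monic := (minpoly.monic hint).map _
    rw [hpm.leadingCoeff, Polynomial.C_1, mul_one] at hP
    refine ⟨P, ?_, hP⟩
    rw [← hP] at hpm
    exact Polynomial.monic_of_injective hιinj hpm
  obtain ⟨hPm, hPp⟩ := hP
  have hPE : ∀ i, ι (P.coeff i) ∈ E := by
    intro i
    have := congrArg (fun R => Polynomial.coeff R i) hPp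
    simp only [Polynomial.coeff_map] at this
    rw [this]
    exact (p.coeff i).2
  have hPdvd : ∀ a : Polynomial K, ι a ∈ E → P ∣ a.map Polynomial.C - Polynomial.C a := by
    intro a ha
    rw [← Polynomial.map_dvd_map ι hιinj hPm, hPp]
    exact hdvd a ha
  -- if all coefficients of `P` were constants, `X` would be algebraic over `K`
  obtain ⟨i, hpos⟩ : ∃ i, 0 < (P.coeff i).natDegree := by
    by_contra! hcon
    have hc : ∀ j, P.coeff j = Polynomial.C ((P.coeff j).coeff 0) := fun j =>
      Polynomial.eq_C_of_natDegree_eq_zero (Nat.le_zero.mp (hcon j))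
    have h0 : P.eval Polynomial.X = 0 := by
      apply hιinj
      rw [map_zero, ← Polynomial.eval₂_hom, ← Polynomial.eval_map, hPp, hι, RatFunc.algebraMap_X,
        Polynomial.eval_map_algebraMap]
      exact minpoly.aeval _ _
    set P0 := P.map (Polynomial.evalRingHom (0 : K)) with hP0
    have hPP : P = P0.map Polynomial.C := by
      ext1 j
      rw [hP0, Polynomial.map_map, Polynomial.coeff_map]
      conv_lhs => rw [hc j]
      simp [Polynomial.coeff_zero_eq_eval_zero]
    have : P0 = 0 := by
      rw [hPP, Polynomial.eval_map, Polynomial.eval₂_C_X] at h0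
      exact h0
    rw [this] at hPP
    exact hPm.ne_zero (by simpa using hPP)
  refine ⟨P.coeff i, hpos, hPE i, fun a ha => ?_⟩
  refine exists_comp_of_sub_dvd E hpos (hPE i) (fun a ha => ?_) _ a (Nat.lt_succ_self _) ha
  exact (sub_dvd_of_dvd_sub hpos (hPdvd _ (hPE i))).trans (hPdvd a ha)

/-! ### Derivations of `L` and intermediate fields -/

theorem LL_induction {p : LL K → Prop} (hK : ∀ c : K, p (algebraMap K (LL K) c))
    (hu : p (uL K)) (hu₁ : p (u₁L K)) (hx : p (xL K)) (hadd : ∀ a b, p a → p b → p (a + b))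
    (hmul : ∀ a b, p a → p b → p (a * b)) (hinv : ∀ a, p a → p a⁻¹) (a : LL K) : p a := by
  have hpoly : ∀ q : MvPolynomial (Fin 3) K, p (algebraMap _ (LL K) q) := by
    intro q
    induction q using MvPolynomial.induction_on with
    | C c => exact hK c
    | add q r hq hr => rw [map_add]; exact hadd _ _ hq hr
    | mul_X q i hq =>
      rw [map_mul]
      refine hmul _ _ hq ?_
      fin_cases i
      exacts [hu, hu₁, hx]
  obtain ⟨q, r, -, rfl⟩ := IsFractionRing.div_surjective (A := MvPolynomial (Fin 3) K) a
  rw [div_eq_mul_inv]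
  exact hmul _ _ (hpoly q) (hinv _ (hpoly r))

/-- The partial derivative `∂/∂u₁` on `L`: localization is formally étale, so the derivation
`∂/∂u₁` of the polynomial ring extends to the fraction field. -/
theorem exists_derivation_u₁ :
    ∃ D : Derivation K (LL K) (LL K), D (uL K) = 0 ∧ D (u₁L K) = 1 ∧ D (xL K) = 0 := by
  let d : Derivation K (MvPolynomial (Fin 3) K) (LL K) :=
    MvPolynomial.mkDerivation K ![0, 1, 0]
  have hbc := KaehlerDifferential.isBaseChange_of_formallyEtale K (MvPolynomial (Fin 3) K) (LL K)
  let D : Derivation K (LL K) (LL K) :=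
    (hbc.lift d.liftKaehlerDifferential).compDer (KaehlerDifferential.D K (LL K))
  have hD : ∀ q, D (algebraMap (MvPolynomial (Fin 3) K) (LL K) q) = d q := by
    intro q
    have h1 := hbc.lift_eq d.liftKaehlerDifferential (KaehlerDifferential.D K _ q)
    rw [KaehlerDifferential.map_D, Derivation.liftKaehlerDifferential_comp_D] at h1
    exact h1
  refine ⟨D, ?_, ?_, ?_⟩
  · exact (hD _).trans (by simp [d])
  · exact (hD _).trans (by simp [d])
  · exact (hD _).trans (by simp [d])

theorem derivation_ext_LL {D₁ D₂ : Derivation K (LL K) (LL K)} (hu : D₁ (uL K) = D₂ (uL K))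
    (hu₁ : D₁ (u₁L K) = D₂ (u₁L K)) (hx : D₁ (xL K) = D₂ (xL K)) : D₁ = D₂ := by
  ext a
  induction a using LL_induction with
  | hK c => simp
  | hu => exact hu
  | hu₁ => exact hu₁
  | hx => exact hx
  | hadd a b ha hb => simp [ha, hb]
  | hmul a b ha hb => simp [ha, hb]
  | hinv a ha => simp [Derivation.leibniz_inv, ha]

theorem derivation_mem_adjoin {L : Type*} [Field L] [Algebra K L] (D : Derivation K L L)
    (S : Set L) (E : IntermediateField K L) (hSE : S ⊆ E) (hD : ∀ s ∈ S, D s ∈ E)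
    {a : L} (ha : a ∈ IntermediateField.adjoin K S) : D a ∈ E := by
  have hle : IntermediateField.adjoin K S ≤ E := IntermediateField.adjoin_le_iff.mpr hSE
  induction ha using IntermediateField.adjoin_induction with
  | mem x hx => exact hD x hx
  | algebraMap c => simp
  | add x y hx hy h1 h2 => rw [map_add]; exact add_mem h1 h2
  | inv x hx h1 =>
    rw [Derivation.leibniz_inv]
    exact mul_mem (neg_mem (pow_mem (inv_mem (hle hx)) 2)) h1
  | mul x y hx hy h1 h2 =>
    rw [Derivation.leibniz]
    exact add_mem (mul_mem (hle hx) h2) (mul_mem (hle hy) h1)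

/-- A derivation sending `B` into `E ⊇ B` also sends each `w ∈ E` algebraic over `B` into `E`:
differentiating `p(w) = 0`, with `p` the minimal polynomial, expresses `p'(w) D(w)` as an element
of `E`, and `p'(w) ≠ 0` by separability. -/
theorem derivation_mem_of_isAlgebraic [CharZero K] {L : Type*} [Field L] [Algebra K L]
    (D : Derivation K L L) (B E : IntermediateField K L) (hBE : B ≤ E) (hD : ∀ b ∈ B, D b ∈ E)
    {w : L} (hw : IsAlgebraic B w) (hwE : w ∈ E) : D w ∈ E := by
  have haev : ∀ p : Polynomial B, Polynomial.aeval w p ∈ E := by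
    intro p
    rw [Polynomial.aeval_eq_sum_range]
    refine sum_mem fun i _ => ?_
    rw [Algebra.smul_def]
    exact mul_mem (hBE (p.coeff i).2) (pow_mem hwE _)
  have key : ∀ p : Polynomial B, ∃ e ∈ E,
      D (Polynomial.aeval w p) = e + Polynomial.aeval w p.derivative * D w := by
    intro p
    induction p using Polynomial.induction_on' with
    | add p q hp hq =>
      obtain ⟨e, he, h1⟩ := hp
      obtain ⟨f, hf, h2⟩ := hq
      refine ⟨e + f, add_mem he hf, ?_⟩
      simp only [map_add, h1, h2]
      ring
    | monomial n b =>
      refine ⟨D b * w ^ n, mul_mem (hD _ b.2) (pow_mem hwE _), ?_⟩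
      simp only [Polynomial.aeval_monomial, Derivation.leibniz, Derivation.leibniz_pow,
        Polynomial.derivative_monomial, smul_eq_mul, nsmul_eq_mul, map_mul, map_natCast]
      rw [show algebraMap B L b = (b : L) from rfl]
      ring
  have hint : IsIntegral B w := hw.isIntegral
  obtain ⟨e, he, h1⟩ := key (minpoly B w)
  have hsep : Polynomial.aeval w (minpoly B w).derivative ≠ 0 :=
    ((minpoly.irreducible hint).separable).aeval_derivative_ne_zero (minpoly.aeval B w)
  rw [minpoly.aeval, map_zero] at h1
  have h2 : D w = -e / Polynomial.aeval w (minpoly B w).derivative := by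
    field_simp
    linear_combination -h1
  rw [h2]
  exact div_mem (neg_mem he) (haev _)

/-! ### Coefficients of elements of `K[u, x]` -/

/-- Evaluation of bivariate polynomials in `L`, with image `K[u, x]`: the inner variable goes to
`x` and the outer one to `u`, so that `q.coeff j` is the coefficient of `u ^ j`, a polynomial
in `x`. -/
def evUX (K : Type) [Field K] : Polynomial (Polynomial K) →ₐ[K] LL K :=
  Polynomial.aevalAeval (xL K) (uL K)

theorem evUX_C (p : Polynomial K) : evUX K (Polynomial.C p) = Polynomial.aeval (xL K) p :=
  Polynomial.aevalAeval_C _ _ _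

theorem evUX_X : evUX K Polynomial.X = uL K := Polynomial.aevalAeval_Y _ _

theorem evUX_eq_sum (q : Polynomial (Polynomial K)) :
    evUX K q = ∑ j ∈ q.support, Polynomial.aeval (xL K) (q.coeff j) * uL K ^ j := by
  conv_lhs => rw [q.as_sum_support_C_mul_X_pow]
  simp [evUX_C, evUX_X]

theorem exists_evUX_eq {a : LL K} (ha : a ∈ KpolyUX K) : ∃ q, evUX K q = a := by
  have : KpolyUX K ≤ (evUX K).range := by
    refine Algebra.adjoin_le ?_
    rintro _ (rfl | rfl)
    · exact ⟨_, evUX_X⟩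
    · refine ⟨Polynomial.C Polynomial.X, ?_⟩
      rw [AlgHom.toRingHom_eq_coe, AlgHom.coe_toRingHom, evUX_C, Polynomial.aeval_X]
  exact this ha

theorem Du_evUX {Du : Derivation K (LL K) (LL K)} (hDuu : Du (uL K) = 1) (hDux : Du (xL K) = 0)
    (q : Polynomial (Polynomial K)) : Du (evUX K q) = evUX K q.derivative := by
  induction q using Polynomial.induction_on' with
  | add p q hp hq => simp [hp, hq]
  | monomial n b =>
    rw [← Polynomial.C_mul_X_pow_eq_monomial]
    simp [evUX_C, evUX_X, Derivation.map_aeval, hDuu, hDux, Polynomial.derivative_X_pow]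

/-- If `E ∋ u` is stable under `∂/∂u`, the coefficients (as a polynomial in `u`) of an element
of `E ∩ K[u, x]` lie in `E`: by induction on the degree those of the `u`-derivative do, which
accounts for all but the constant one in characteristic zero. -/
theorem coeff_mem_of_evUX_mem [CharZero K] {Du : Derivation K (LL K) (LL K)}
    (hDuu : Du (uL K) = 1) (hDux : Du (xL K) = 0) {E : IntermediateField K (LL K)}
    (huE : uL K ∈ E) (hE : ∀ a ∈ E, Du a ∈ E) (n : ℕ) (q : Polynomial (Polynomial K))
    (hn : q.natDegree ≤ n) (hq : evUX K q ∈ E) (j : ℕ) :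
    Polynomial.aeval (xL K) (q.coeff j) ∈ E := by
  induction n generalizing q j with
  | zero =>
    rw [Polynomial.eq_C_of_natDegree_le_zero hn, evUX_C] at hq
    rcases j with _ | j
    · exact hq
    · rw [Polynomial.coeff_eq_zero_of_natDegree_lt (by omega), map_zero]
      exact zero_mem _
  | succ n ih =>
    have hsucc : ∀ j, Polynomial.aeval (xL K) (q.coeff (j + 1)) ∈ E := by
      intro j
      have h1 := ih q.derivative ((Polynomial.natDegree_derivative_le q).trans (by omega))
        (by rw [← Du_evUX hDuu hDux]; exact hE _ hq) j
      rw [Polynomial.coeff_derivative] at h1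
      have hj : ((j : LL K) + 1) ≠ 0 := by
        have : CharZero (LL K) := charZero_of_injective_algebraMap (algebraMap K (LL K)).injective
        exact_mod_cast Nat.succ_ne_zero j
      have h2 : Polynomial.aeval (xL K) (q.coeff (j + 1)) =
          Polynomial.aeval (xL K) (q.coeff (j + 1) * ((j : Polynomial K) + 1)) /
            ((j : LL K) + 1) := by
        simp [hj]
      rw [h2]
      exact div_mem h1 (add_mem (natCast_mem E j) (one_mem E))
    rcases j with _ | j
    · have h1 : Polynomial.aeval (xL K) (q.coeff 0) = evUX K q - evUX K q.divX * uL K := by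
        have h2 := congrArg (evUX K) (Polynomial.divX_mul_X_add q)
        rw [map_add, map_mul, evUX_C, evUX_X] at h2
        linear_combination h2
      rw [h1]
      refine sub_mem hq (mul_mem ?_ huE)
      rw [evUX_eq_sum]
      refine sum_mem fun j _ => mul_mem ?_ (pow_mem huE _)
      rw [Polynomial.coeff_divX]
      exact hsucc j
    · exact hsucc j

/-! ### Substituting a polynomial for `x` -/

theorem algebraicIndependent_LL : AlgebraicIndependent K
    (fun i => algebraMap (MvPolynomial (Fin 3) K) (LL K) (X i)) :=
  (MvPolynomial.algebraicIndependent_X (Fin 3) K).map'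
    (f := IsScalarTower.toAlgHom K (MvPolynomial (Fin 3) K) (LL K))
    (IsFractionRing.injective (MvPolynomial (Fin 3) K) (LL K))

theorem aeval_xL_injective : Function.Injective (Polynomial.aeval (R := K) (xL K)) :=
  transcendental_iff_injective.mp (algebraicIndependent_LL.transcendental 2)

/-- Since `h` is nonconstant, `u, u₁, h(x)` are algebraically independent, so the substitution
`x ↦ h(x)` extends to the fraction field. -/
theorem exists_substitution {h : Polynomial K} (hpos : 0 < h.natDegree) :
    ∃ σ : LL K →ₐ[K] LL K, σ (uL K) = uL K ∧ σ (u₁L K) = u₁L K ∧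
      σ (xL K) = Polynomial.aeval (xL K) h := by
  have hAI := algebraicIndependent_LL (K := K).polynomial_aeval_of_transcendental
    (f := ![Polynomial.X, Polynomial.X, h]) (by
      intro i
      fin_cases i
      · exact Polynomial.transcendental_X K
      · exact Polynomial.transcendental_X K
      · refine h.transcendental hpos.ne' (mem_nonZeroDivisors_of_ne_zero ?_)
        rw [Ne, Polynomial.leadingCoeff_eq_zero]
        rintro rfl
        simp at hpos)
  rw [algebraicIndependent_iff_injective_aeval] at hAI
  refine ⟨IsFractionRing.liftAlgHom hAI, ?_, ?_, ?_⟩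
  all_goals
    simp only [uL, u₁L, xL]
    rw [IsFractionRing.liftAlgHom_apply, IsFractionRing.lift_algebraMap]
    simp

/-- `exists_luroth_generator` for subfields `E` of `L`, applied to the preimage of `E` in
`K(x)`. -/
theorem exists_generator_of_mem (E : IntermediateField K (LL K)) {b : Polynomial K}
    (hb : 0 < b.natDegree) (hbE : Polynomial.aeval (xL K) b ∈ E) :
    ∃ h : Polynomial K, 0 < h.natDegree ∧ Polynomial.aeval (xL K) h ∈ E ∧
      ∀ a : Polynomial K, Polynomial.aeval (xL K) a ∈ E → ∃ q : Polynomial K, a = q.comp h := by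
  let φ : RatFunc K →ₐ[K] LL K := IsFractionRing.liftAlgHom (aeval_xL_injective (K := K))
  have hφ : ∀ a : Polynomial K, algebraMap (Polynomial K) (RatFunc K) a ∈ E.comap φ ↔
      Polynomial.aeval (xL K) a ∈ E := by
    intro a
    have : φ (algebraMap (Polynomial K) (RatFunc K) a) = Polynomial.aeval (xL K) a := by
      simp only [φ]
      rw [IsFractionRing.liftAlgHom_apply, IsFractionRing.lift_algebraMap]
      rfl
    rw [← this]
    exact Iff.rfl
  simpa only [hφ] using exists_luroth_generator (E.comap φ) hb ((hφ b).mpr hbE)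

/-- The chain rule `D'(σ(a)) = σ(D(a)) c` holds on all of `L` once it holds for `u, u₁, x`. -/
theorem derivation_comp_substitution {σ : LL K →ₐ[K] LL K} (D : Derivation K (LL K) (LL K))
    {D' : Derivation K (LL K) (LL K)} (c : LL K) (hu : D' (σ (uL K)) = σ (D (uL K)) * c)
    (hu₁ : D' (σ (u₁L K)) = σ (D (u₁L K)) * c) (hx : D' (σ (xL K)) = σ (D (xL K)) * c)
    (a : LL K) : D' (σ a) = σ (D a) * c := by
  induction a using LL_induction with
  | hK c => simp
  | hu => exact hu
  | hu₁ => exact hu₁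
  | hx => exact hx
  | hadd a b ha hb => simp [ha, hb, add_mul]
  | hmul a b ha hb =>
    simp only [map_mul, Derivation.leibniz, smul_eq_mul, map_add, ha, hb]
    ring
  | hinv a ha =>
    simp only [map_inv₀, Derivation.leibniz_inv, smul_eq_mul, map_mul, map_neg, map_pow, ha]
    ring

/-- If `g ∈ K[u, x]` and `∂g/∂x ≠ 0`, then `L` is algebraic over `K(u, u₁, g)`: writing
`g = Q(x)` with `Q` over `K(u, u₁, g)`, the polynomial `Q(T) - g` vanishes at `x`, and it is
nonzero because its derivative takes the value `∂g/∂x` there. -/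
theorem isAlgebraic_of_Dx_ne_zero {Dx : Derivation K (LL K) (LL K)} (hDxu : Dx (uL K) = 0)
    (hDxx : Dx (xL K) = 1) {g : LL K} (hg : g ∈ KpolyUX K) (hg0 : Dx g ≠ 0) (a : LL K) :
    IsAlgebraic (IntermediateField.adjoin K {uL K, u₁L K, g}) a := by
  set B := IntermediateField.adjoin K {uL K, u₁L K, g} with hB
  have hsub : ({uL K, u₁L K, g} : Set (LL K)) ⊆ B := IntermediateField.subset_adjoin _ _
  have huB : uL K ∈ B := hsub (by simp)
  have hu₁B : u₁L K ∈ B := hsub (by simp)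
  have hgB : g ∈ B := hsub (by simp)
  have hB' : ∀ b (hb : b ∈ B), IsAlgebraic B b := fun b hb =>
    isAlgebraic_algebraMap (⟨b, hb⟩ : B)
  obtain ⟨Q, hQ, hQ'⟩ : ∃ Q : Polynomial B, Polynomial.aeval (xL K) Q = g ∧
      Polynomial.aeval (xL K) Q.derivative = Dx g := by
    clear hg0 hgB hsub
    clear_value B
    clear hB
    induction hg using Algebra.adjoin_induction with
    | mem y hy =>
      rcases hy with rfl | rfl
      · refine ⟨Polynomial.C ⟨uL K, huB⟩, ?_, ?_⟩
        · rw [Polynomial.aeval_C]; rfl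
        · simp [hDxu]
      · exact ⟨Polynomial.X, by simp, by simp [hDxx]⟩
    | algebraMap r =>
      refine ⟨Polynomial.C (algebraMap K B r), ?_, by simp⟩
      rw [Polynomial.aeval_C]; rfl
    | add y z hy hz h1 h2 =>
      obtain ⟨P, hP, hP'⟩ := h1
      obtain ⟨Q, hQ, hQ'⟩ := h2
      exact ⟨P + Q, by simp [hP, hQ], by simp [hP', hQ']⟩
    | mul y z hy hz h1 h2 =>
      obtain ⟨P, hP, hP'⟩ := h1
      obtain ⟨Q, hQ, hQ'⟩ := h2
      refine ⟨P * Q, by simp [hP, hQ], ?_⟩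
      simp only [Polynomial.derivative_mul, map_add, map_mul, hP, hQ, hP', hQ',
        Derivation.leibniz, smul_eq_mul]
      ring
  have hx : IsAlgebraic B (xL K) := by
    refine ⟨Q - Polynomial.C ⟨g, hgB⟩, ?_, ?_⟩
    · intro h0
      have h1 := congrArg (fun R => Polynomial.aeval (xL K) (Polynomial.derivative R)) h0
      simp only [Polynomial.derivative_sub, Polynomial.derivative_C, sub_zero, hQ',
        map_zero] at h1
      exact hg0 h1
    · rw [map_sub, hQ, Polynomial.aeval_C]
      exact sub_self g
  induction a using LL_induction with
  | hK c => exact hB' _ (B.algebraMap_mem c)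
  | hu => exact hB' _ huB
  | hu₁ => exact hB' _ hu₁B
  | hx => exact hx
  | hadd a b ha hb => exact ha.add hb
  | hmul a b ha hb => exact ha.mul hb
  | hinv a ha => exact ha.inv

/-- The field `E = K(u, u₁, g, L_f(g))` is stable under `∂/∂u` and `f ∂/∂x`.  It is stable under
`∂/∂u₁` and under the total derivative `f ∂/∂x + u₁ ∂/∂u`, whose commutator is `∂/∂u`. -/
theorem Du_mem_and_fDx_mem [CharZero K] {Dx Du : Derivation K (LL K) (LL K)}
    (hDxu : Dx (uL K) = 0) (hDxu₁ : Dx (u₁L K) = 0) (hDxx : Dx (xL K) = 1)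
    (hDuu : Du (uL K) = 1) (hDuu₁ : Du (u₁L K) = 0) (hDux : Du (xL K) = 0)
    {f g : LL K} (hf : f ∈ KpolyUX K) (hg : g ∈ KpolyUX K) (hg0 : Dx g ≠ 0)
    {E : IntermediateField K (LL K)}
    (hE : E = IntermediateField.adjoin K {uL K, u₁L K, g, lieD Dx Du f g}) :
    ∀ a ∈ E, Du a ∈ E ∧ f * Dx a ∈ E := by
  set w := lieD Dx Du f g with hw
  set B := IntermediateField.adjoin K {uL K, u₁L K, g} with hB
  have hsub : ({uL K, u₁L K, g, w} : Set (LL K)) ⊆ E := by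
    rw [hE]; exact IntermediateField.subset_adjoin _ _
  have huE : uL K ∈ E := hsub (by simp)
  have hu₁E : u₁L K ∈ E := hsub (by simp)
  have hgE : g ∈ E := hsub (by simp)
  have hwE : w ∈ E := hsub (by simp)
  have hBsub : ({uL K, u₁L K, g} : Set (LL K)) ⊆ E := by
    rintro _ (rfl | rfl | rfl) <;> assumption
  have hBE : B ≤ E := IntermediateField.adjoin_le_iff.mpr hBsub
  -- a derivation sending `u, u₁, g` into `E` preserves `E`, as `w` is algebraic over `B`
  have hstab : ∀ D : Derivation K (LL K) (LL K), D (uL K) ∈ E → D (u₁L K) ∈ E → D g ∈ E →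
      ∀ a ∈ E, D a ∈ E := by
    intro D h1 h2 h3 a ha
    have hDB : ∀ b ∈ B, D b ∈ E := fun b hb => by
      refine derivation_mem_adjoin D _ E hBsub ?_ hb
      rintro _ (rfl | rfl | rfl) <;> assumption
    have hDw : D w ∈ E := derivation_mem_of_isAlgebraic D B E hBE hDB
      (isAlgebraic_of_Dx_ne_zero hDxu hDxx hg hg0 w) hwE
    rw [hE] at ha
    refine derivation_mem_adjoin D _ E hsub ?_ ha
    rintro _ (rfl | rfl | rfl | rfl) <;> assumption
  obtain ⟨D₁, hD₁u, hD₁u₁, hD₁x⟩ := exists_derivation_u₁ (K := K)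
  have hD₁ : ∀ a ∈ KpolyUX K, D₁ a = 0 := by
    intro a ha
    refine Derivation.eqOn_adjoin (D2 := 0) ?_ ha
    rintro _ (rfl | rfl) <;> assumption
  set D : Derivation K (LL K) (LL K) := f • Dx + u₁L K • Du with hD
  have hDapp : ∀ a, D a = f * Dx a + u₁L K * Du a := fun a => rfl
  have hcomm : ⁅D₁, D⁆ = Du := by
    apply derivation_ext_LL <;>
      simp [Derivation.commutator_apply, hDapp, hD₁u, hD₁u₁, hD₁x, hDxu, hDxu₁, hDxx, hDuu, hDuu₁,
        hDux, hD₁ f hf]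
  have hD₁E : ∀ a ∈ E, D₁ a ∈ E :=
    hstab D₁ (by simp [hD₁u]) (by simp [hD₁u₁]) (by simp [hD₁ g hg])
  have hDE : ∀ a ∈ E, D a ∈ E := by
    refine hstab D ?_ ?_ ?_
    · simpa [hDapp, hDxu, hDuu] using hu₁E
    · simp [hDapp, hDxu₁, hDuu₁]
    · rw [hDapp, mul_comm f, mul_comm (u₁L K)]
      exact hwE
  have hDuE : ∀ a ∈ E, Du a ∈ E := by
    intro a ha
    rw [← hcomm, Derivation.commutator_apply]
    exact sub_mem (hD₁E _ (hDE a ha)) (hDE _ (hD₁E a ha))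
  refine fun a ha => ⟨hDuE a ha, ?_⟩
  have : f * Dx a = D a - u₁L K * Du a := by rw [hDapp]; ring
  rw [this]
  exact sub_mem (hDE a ha) (mul_mem hu₁E (hDuE a ha))

theorem exists_coeff_natDegree_pos {Dx : Derivation K (LL K) (LL K)} (hDxu : Dx (uL K) = 0)
    {q : Polynomial (Polynomial K)} (hq : Dx (evUX K q) ≠ 0) : ∃ j, 0 < (q.coeff j).natDegree := by
  by_contra! hcon
  apply hq
  rw [evUX_eq_sum, map_sum]
  refine Finset.sum_eq_zero fun j _ => ?_
  rw [Polynomial.eq_C_of_natDegree_le_zero (hcon j)]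
  simp [Derivation.leibniz_pow, hDxu]

/-- If `E ∩ K[x] = K[h]` and `E ∋ u` is stable under `∂/∂u`, then every element of `E ∩ K[u, x]`
has the form `b(u, h)` with `b ∈ K[u, x]`: each of its `u`-coefficients is a polynomial in `h`. -/
theorem exists_preimage_substitution [CharZero K] {Du : Derivation K (LL K) (LL K)}
    (hDuu : Du (uL K) = 1) (hDux : Du (xL K) = 0) {E : IntermediateField K (LL K)}
    (huE : uL K ∈ E) (hE : ∀ a ∈ E, Du a ∈ E) {h : Polynomial K}
    (hh : ∀ a : Polynomial K, Polynomial.aeval (xL K) a ∈ E → ∃ q : Polynomial K, a = q.comp h)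
    {σ : LL K →ₐ[K] LL K} (hσu : σ (uL K) = uL K) (hσx : σ (xL K) = Polynomial.aeval (xL K) h)
    {a : LL K} (ha : a ∈ KpolyUX K) (haE : a ∈ E) : ∃ b ∈ KpolyUX K, σ b = a := by
  obtain ⟨q, rfl⟩ := exists_evUX_eq ha
  choose r hr using fun j => hh _ (coeff_mem_of_evUX_mem hDuu hDux huE hE _ q le_rfl haE j)
  have hu : uL K ∈ KpolyUX K := Algebra.subset_adjoin (by simp)
  refine ⟨∑ j ∈ q.support, Polynomial.aeval (xL K) (r j) * uL K ^ j, ?_, ?_⟩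
  · refine sum_mem fun j _ => mul_mem ?_ (pow_mem hu _)
    exact Algebra.adjoin_mono (by simp) (Polynomial.aeval_mem_adjoin_singleton K (xL K))
  · rw [evUX_eq_sum, map_sum]
    refine Finset.sum_congr rfl fun j _ => ?_
    rw [map_mul, map_pow, hσu, ← Polynomial.aeval_algHom_apply, hσx]
    conv_rhs => rw [hr j, Polynomial.aeval_comp]

/-! ### Observable realizations -/

/-- **Theorem 3.6 (observable polynomial realizations).** Fix an irreducible polynomial
`F ∈ K[u,u₁,y,y₁]` with positive degree in `y₁`, over an algebraically closed field `K`
of characteristic zero.  If `F` admits a polynomial realization, then `F` admits an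
observable polynomial realization. -/
theorem exists_observable_polyRealization
    {K : Type} [Field K] [IsAlgClosed K] [CharZero K]
    (Dx Du : Derivation K (LL K) (LL K))
    (hDxu : Dx (uL K) = 0) (hDxu₁ : Dx (u₁L K) = 0) (hDxx : Dx (xL K) = 1)
    (hDuu : Du (uL K) = 1) (hDuu₁ : Du (u₁L K) = 0) (hDux : Du (xL K) = 0)
    (F : MvPolynomial (Fin 4) K) (hFirr : Irreducible F) (hFdeg : 0 < F.degreeOf 3)
    (h : ∃ f g : LL K, IsPolyRealization Dx Du F f g) :
    ∃ f g : LL K, IsPolyRealization Dx Du F f g ∧ IsObservable Dx Du f g := by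
  obtain ⟨f, g, ⟨-, -, hg0, hF⟩, hf, hg⟩ := h
  set E := IntermediateField.adjoin K {uL K, u₁L K, g, lieD Dx Du f g} with hE
  have hsub : ({uL K, u₁L K, g, lieD Dx Du f g} : Set (LL K)) ⊆ E :=
    IntermediateField.subset_adjoin _ _
  have huE : uL K ∈ E := hsub (by simp)
  have hgE : g ∈ E := hsub (by simp)
  have hstab := Du_mem_and_fDx_mem hDxu hDxu₁ hDxx hDuu hDuu₁ hDux hf hg hg0 hE
  have hDuE : ∀ a ∈ E, Du a ∈ E := fun a ha => (hstab a ha).1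
  obtain ⟨h, hpos, hhE, hh⟩ : ∃ h : Polynomial K, 0 < h.natDegree ∧
      Polynomial.aeval (xL K) h ∈ E ∧ ∀ a : Polynomial K, Polynomial.aeval (xL K) a ∈ E →
        ∃ q : Polynomial K, a = q.comp h := by
    obtain ⟨q, rfl⟩ := exists_evUX_eq hg
    obtain ⟨j, hj⟩ := exists_coeff_natDegree_pos hDxu hg0
    exact exists_generator_of_mem E hj
      (coeff_mem_of_evUX_mem hDuu hDux huE hDuE _ q le_rfl hgE j)
  obtain ⟨σ, hσu, hσu₁, hσx⟩ := exists_substitution hpos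
  have hDxh : Dx (Polynomial.aeval (xL K) h) = Polynomial.aeval (xL K) h.derivative := by
    rw [Derivation.map_aeval, hDxx, smul_eq_mul, mul_one]
  have hDuh : Du (Polynomial.aeval (xL K) h) = 0 := by
    rw [Derivation.map_aeval, hDux, smul_zero]
  have hxpoly : ∀ p : Polynomial K, Polynomial.aeval (xL K) p ∈ KpolyUX K := fun p =>
    Algebra.adjoin_mono (by simp) (Polynomial.aeval_mem_adjoin_singleton K (xL K))
  obtain ⟨G, hG, hσG⟩ := exists_preimage_substitution hDuu hDux huE hDuE hh hσu hσx hg hgE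
  obtain ⟨R, hR, hσR⟩ := exists_preimage_substitution hDuu hDux huE hDuE hh hσu hσx
    (mul_mem hf (hDxh ▸ hxpoly _)) (hstab _ hhE).2
  have hDxσ : Dx g = σ (Dx G) * Dx (Polynomial.aeval (xL K) h) := by
    rw [← hσG]
    apply derivation_comp_substitution
    · simp [hσu, hDxu]
    · simp [hσu₁, hDxu₁]
    · simp [hσx, hDxx]
  have hDuσ : Du g = σ (Du G) := by
    rw [← hσG, ← mul_one (σ (Du G))]
    apply derivation_comp_substitution
    · simp [hσu, hDuu]
    · simp [hσu₁, hDuu₁]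
    · simp [hσx, hDux, hDuh]
  have hlie : σ (lieD Dx Du R G) = lieD Dx Du f g := by
    simp only [lieD, map_add, map_mul, hσR, hσu₁, ← hDuσ, hDxσ]
    ring
  have hle : KpolyUX K ≤ (Kux K).toSubalgebra := IntermediateField.algebra_adjoin_le_adjoin _ _
  refine ⟨R, G, ⟨⟨hle hR, hle hG, ?_, ?_⟩, hR, hG⟩, ?_⟩
  · intro h0
    rw [h0, map_zero, zero_mul] at hDxσ
    exact hg0 hDxσ
  · apply σ.injective
    change σ (MvPolynomial.aeval _ F) = σ 0
    rw [map_zero, ← hF, ← AlgHom.comp_apply, MvPolynomial.comp_aeval]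
    congr 2
    funext i
    fin_cases i
    exacts [hσu, hσu₁, hσG, hlie]
  · -- `σ` carries the new field onto `E`, and `σ x = h(x) ∈ E`
    set E' := IntermediateField.adjoin K {uL K, u₁L K, G, lieD Dx Du R G} with hE'
    have hmap : E'.map σ = E := by
      rw [hE', IntermediateField.adjoin_map, hE]
      simp [Set.image_insert_eq, hσu, hσu₁, hσG, hlie]
    have hsub' : ({uL K, u₁L K, G, lieD Dx Du R G} : Set (LL K)) ⊆ E' :=
      IntermediateField.subset_adjoin _ _
    have hx : xL K ∈ E' := by
      rw [← hσx, ← hmap] at hhE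
      obtain ⟨y, hy, hyx⟩ := hhE
      rwa [← σ.injective hyx]
    change E' = ⊤
    rw [eq_top_iff]
    rintro a -
    induction a using LL_induction with
    | hK c => exact E'.algebraMap_mem c
    | hu => exact hsub' (by simp)
    | hu₁ => exact hsub' (by simp)
    | hx => exact hx
    | hadd a b ha hb => exact add_mem ha hb
    | hmul a b ha hb => exact mul_mem ha hb
    | hinv a ha => exact inv_mem ha
end
end

section
/- Proposition 3.2 (criterion for polynomial realizability). Fix an irreducible polynomial F ∈ K[u,u₁,y,y₁] with positive degree in y₁, over an algebraically closed field K of characteristic zero. Then F admits a polynomial realization if and only if there exist P₀ ∈ K[u,x] with ∂P₀/∂x ≠ 0 and P₁ ∈ K(u,u₁)[x] (an element of L that is polynomial in x with coefficients rational in u,u₁) such that F(u,u₁,P₀,P₁) = 0 in L and the element (P₁ − (∂P₀/∂u)·u₁)/(∂P₀/∂x) of L lies in K[u,x]. -/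
/-! The two conditions are related by the substitution `P₀ = g`, `P₁ = L_f(g)`,
`f = (P₁ − (∂P₀/∂u)·u₁)/(∂P₀/∂x)`, which is invertible because `L_f(g)` is affine in `f`
with nonzero leading coefficient `∂g/∂x`.  The only points to verify are memberships:
`K[u,x]` is contained in both `K(u,x)` and `K(u,u₁)[x]`, and it is stable under `∂/∂x`
and `∂/∂u`, so that `L_f(g) ∈ K(u,u₁)[x]` for `f, g ∈ K[u,x]`. -/


noncomputable section

open MvPolynomial

variable (K : Type) [Field K]

variable {K}

lemma KpolyUX_le_Kux {K : Type} [Field K] {a : LL K} (ha : a ∈ KpolyUX K) : a ∈ Kux K :=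
  IntermediateField.algebra_adjoin_le_adjoin K _ ha

lemma u₁L_mem_KUU₁X {K : Type} [Field K] : u₁L K ∈ KUU₁X K :=
  Subring.subset_closure
    (Or.inl (IntermediateField.subset_adjoin K _ (by simp)))

lemma KpolyUX_le_KUU₁X {K : Type} [Field K] {a : LL K} (ha : a ∈ KpolyUX K) :
    a ∈ KUU₁X K := by
  induction ha using Algebra.adjoin_induction with
  | mem y hy =>
    rcases hy with rfl | rfl
    · exact Subring.subset_closure (Or.inl (IntermediateField.subset_adjoin K _ (by simp)))
    · exact Subring.subset_closure (Or.inr rfl)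
  | algebraMap r =>
    exact Subring.subset_closure
      (Or.inl ((IntermediateField.adjoin K {uL K, u₁L K}).algebraMap_mem r))
  | add y z _ _ hy hz => exact add_mem hy hz
  | mul y z _ _ hy hz => exact mul_mem hy hz

/-- By the Leibniz rule, a derivation sending the generators `u, x` into `K[u,x]` preserves
`K[u,x]`. -/
lemma derivation_mem_KpolyUX {K : Type} [Field K] (D : Derivation K (LL K) (LL K))
    (hu : D (uL K) ∈ KpolyUX K) (hx : D (xL K) ∈ KpolyUX K) {a : LL K}
    (ha : a ∈ KpolyUX K) : D a ∈ KpolyUX K := by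
  induction ha using Algebra.adjoin_induction with
  | mem y hy =>
    rcases hy with rfl | rfl
    · exact hu
    · exact hx
  | algebraMap r =>
    rw [D.map_algebraMap]
    exact zero_mem _
  | add y z _ _ hy hz =>
    rw [map_add]
    exact add_mem hy hz
  | mul y z hy' hz' hy hz =>
    rw [D.leibniz, smul_eq_mul, smul_eq_mul]
    exact add_mem (mul_mem hy' hz) (mul_mem hz' hy)

/-- **Proposition 3.2 (criterion for polynomial realizability).** Fix an irreducible
polynomial `F ∈ K[u,u₁,y,y₁]` with positive degree in `y₁`, over an algebraically closed
field `K` of characteristic zero.  Then `F` admits a polynomial realization if and only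
if there exist `P₀ ∈ K[u,x]` with `∂P₀/∂x ≠ 0` and `P₁ ∈ K(u,u₁)[x]` such that
`F(u,u₁,P₀,P₁) = 0` in `L` and `(P₁ − (∂P₀/∂u)·u₁)/(∂P₀/∂x) ∈ K[u,x]`. -/
theorem polyRealizable_iff_exists_param
    {K : Type} [Field K] [IsAlgClosed K] [CharZero K]
    (Dx Du : Derivation K (LL K) (LL K))
    (hDxu : Dx (uL K) = 0) (hDxu₁ : Dx (u₁L K) = 0) (hDxx : Dx (xL K) = 1)
    (hDuu : Du (uL K) = 1) (hDuu₁ : Du (u₁L K) = 0) (hDux : Du (xL K) = 0)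
    (F : MvPolynomial (Fin 4) K) (hFirr : Irreducible F) (hFdeg : 0 < F.degreeOf 3) :
    (∃ f g : LL K, IsPolyRealization Dx Du F f g) ↔
      ∃ P₀ P₁ : LL K, P₀ ∈ KpolyUX K ∧ Dx P₀ ≠ 0 ∧ P₁ ∈ KUU₁X K ∧
        MvPolynomial.aeval ![uL K, u₁L K, P₀, P₁] F = 0 ∧
        (P₁ - Du P₀ * u₁L K) / Dx P₀ ∈ KpolyUX K := by
  constructor
  · rintro ⟨f, g, ⟨-, -, hg, hF⟩, hf, hgp⟩
    have hx : Dx g ∈ KpolyUX K :=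
      derivation_mem_KpolyUX Dx (hDxu ▸ zero_mem _) (hDxx ▸ one_mem _) hgp
    have hu : Du g ∈ KpolyUX K :=
      derivation_mem_KpolyUX Du (hDuu ▸ one_mem _) (hDux ▸ zero_mem _) hgp
    refine ⟨g, lieD Dx Du f g, hgp, hg, ?_, hF, ?_⟩
    · exact add_mem (mul_mem (KpolyUX_le_KUU₁X hx) (KpolyUX_le_KUU₁X hf))
        (mul_mem (KpolyUX_le_KUU₁X hu) u₁L_mem_KUU₁X)
    · rwa [lieD, add_sub_cancel_right, mul_div_cancel_left₀ _ hg]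
  · rintro ⟨P₀, P₁, hP₀, hD, -, hF, hf⟩
    have hlie : lieD Dx Du ((P₁ - Du P₀ * u₁L K) / Dx P₀) P₀ = P₁ := by
      rw [lieD, mul_div_cancel₀ _ hD, sub_add_cancel]
    exact ⟨_, P₀, ⟨KpolyUX_le_Kux hf, KpolyUX_le_Kux hP₀, hD, by rwa [hlie]⟩, hf, hP₀⟩
end
end

section
/- Lemma 3.3 (polynomial dependence on the input is intrinsic). Fix an irreducible polynomial F ∈ K[u,u₁,y,y₁] with positive degree in y₁, over an algebraically closed field K of characteristic zero, and suppose F is realizable. If F admits one rational realization (f₁,g₁) with both f₁ and g₁ lying in the localization K[u,x]_{K[x]∖{0}} ⊆ K(u,x) (i.e., f₁, g₁ can be written with denominators in K[x], so they depend polynomially on u), then EVERY rational realization (f,g) of F has f and g in this localization. Equivalently, either every realization of F depends polynomially on u or none of them does. -/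
/-!
# Polynomial dependence on the input is intrinsic

Let `(f₁, g₁)` and `(f, g)` be two realizations of `F`, the first polynomial in `u`.

*Transport.*  Since `∂g₁/∂x ≠ 0`, the elements `u, u₁, g₁` form a transcendence basis of `L` over
`K`, and likewise `u, u₁, g` (`basis_of_output`).  By Gauss's lemma, the polynomials in
`K[u,u₁,y,y₁]` vanishing at either realization are the multiples of `F` (`dvd_of_aeval_eq_zero`).
So, with `Ω` an algebraic closure of `L`, there is a `K`-embedding `ψ : L → Ω` fixing `u` and `u₁`
and sending `g₁` to `g` and `L_{f₁}(g₁)` to `L_f(g)` (`exists_algHom`).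

*The image of `x` does not involve `u`.*  Extend `∂/∂x` and `∂/∂u` to derivations `Ex` and `Eu` of
`Ω`.  The derivations `f·Ex + u₁·Eu` of `Ω` and `f₁·∂/∂x + u₁·∂/∂u` of `L` are intertwined by `ψ` on
`u, u₁, g₁`, hence on all of `L` (`der_comp_eq`); at `x` this reads
`f·Ex(ψ x) + u₁·Eu(ψ x) = ψ(f₁)`.
Everything here except `u₁` is algebraic over `K(u,x)`, while `u₁` is not, so `Eu(ψ x) = 0`.
As `Eu u = 1`, the exchange property of algebraic closure forces `ψ x` to be algebraic over `K(x)`.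

*Conclusion.*  Let `C` be the relative algebraic closure of `K(x)` in `Ω`.  Elements depending
polynomially on `u` are those of `K(x)[u]` (`dependsPolynomiallyOnU_iff`), and `ψ` maps `K(x)[u]`
into `C[u]`.  Thus `g = ψ(g₁)` and `f = ψ(f₁) / Ex(ψ x)` lie in `C[u] ∩ K(u,x)`, and this
intersection is `K(x)[u]`, because divisibility of polynomials descends along the field extension
`K(x) ⊆ C` (`descent`).
-/

noncomputable section

open MvPolynomial

variable (K : Type) [Field K]

variable {K}

variable (K) in
/-- An element `h ∈ K(u,x)` depends polynomially on `u` if it lies in the localization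
of `K[u,x]` at the multiplicative set `K[x] ∖ {0}`, i.e. it can be written as `p/q`
with `p ∈ K[u,x]` and `q ∈ K[x] ∖ {0}`. -/
def DependsPolynomiallyOnU (h : LL K) : Prop :=
  ∃ p ∈ KpolyUX K, ∃ q ∈ Algebra.adjoin K {xL K}, q ≠ 0 ∧ h = p / q

/-! ### Relative algebraic closure and derivations -/

section Closure
variable (K) {E : Type} [Field E] [Algebra K E]

/-- The relative algebraic closure in `E` of the subfield `K(s)`, as an intermediate field of
`E / K`. -/
def cl (s : Set E) : IntermediateField K E :=
  (algebraicClosure (IntermediateField.adjoin K s) E).restrictScalars K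

variable {K}

theorem mem_cl_iff {s : Set E} {a : E} :
    a ∈ cl K s ↔ IsAlgebraic (IntermediateField.adjoin K s) a := by
  simp [cl, IntermediateField.mem_restrictScalars, mem_algebraicClosure_iff]

theorem mem_cl_iff' {s : Set E} {a : E} :
    a ∈ cl K s ↔ IsAlgebraic (Algebra.adjoin K s) a := by
  rw [mem_cl_iff, IntermediateField.isAlgebraic_adjoin_iff]

/-- `cl` is the closure operator of the algebraic independence matroid, which provides
idempotence and the exchange property. -/
theorem mem_cl_iff_closure {s : Set E} {a : E} :
    a ∈ cl K s ↔ a ∈ (AlgebraicIndependent.matroid K E).closure s := by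
  rw [AlgebraicIndependent.matroid_closure_eq, mem_cl_iff']
  rfl

theorem subset_cl (s : Set E) : s ⊆ cl K s := fun a ha => by
  rw [SetLike.mem_coe, mem_cl_iff_closure]
  exact Matroid.subset_closure _ s (Set.subset_univ _) ha

theorem cl_le {s t : Set E} (h : s ⊆ cl K t) : cl K s ≤ cl K t := fun a ha => by
  rw [mem_cl_iff_closure] at ha ⊢
  refine Matroid.closure_subset_closure_of_subset_closure ?_ ha
  intro b hb
  exact mem_cl_iff_closure.1 (h hb)

theorem adjoin_le_cl {s t : Set E} (h : s ⊆ cl K t) : IntermediateField.adjoin K s ≤ cl K t :=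
  IntermediateField.adjoin_le_iff.2 h

theorem cl_exchange {s : Set E} {a b : E} (h : a ∈ cl K (insert b s)) (h' : a ∉ cl K s) :
    b ∈ cl K (insert a s) := by
  rw [mem_cl_iff_closure] at *
  exact (Matroid.mem_closure_insert h' h)

theorem map_mem_cl_iff {E' : Type} [Field E'] [Algebra K E'] (ψ : E →ₐ[K] E') {s : Set E} {a : E} :
    ψ a ∈ cl K (ψ '' s) ↔ a ∈ cl K s := by
  rw [mem_cl_iff', mem_cl_iff', ← AlgHom.map_adjoin]
  exact isAlgebraic_ringHom_iff_of_comp_eq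
    ((Algebra.adjoin K s).equivMapOfInjective ψ ψ.injective) ψ ψ.injective rfl

/-- A derivation vanishing on `s` vanishes on everything algebraic over `K(s)`: it is
`K(s)`-linear, so applying it to the separable minimal polynomial `m` of `a` gives
`m'(a) • d a = 0`. -/
theorem der_eq_zero [CharZero K] {M : Type} [AddCommGroup M] [Module E M] [Module K M]
    [IsScalarTower K E M]
    (d : Derivation K E M) {s : Set E} (hs : ∀ a ∈ s, d a = 0) {a : E} (ha : a ∈ cl K s) :
    d a = 0 := by
  have hk : ∀ c ∈ IntermediateField.adjoin K s, d c = 0 := fun c hc => by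
    induction hc using IntermediateField.adjoin_induction with
    | mem x hx => exact hs x hx
    | algebraMap x => simp
    | add x y _ _ hx hy => simp [hx, hy]
    | inv x _ hx => rw [Derivation.leibniz_inv, hx, smul_zero]
    | mul x y _ _ hx hy => simp [hx, hy]
  let : Module (IntermediateField.adjoin K s) M :=
    Module.compHom M (algebraMap (IntermediateField.adjoin K s) E)
  have : IsScalarTower (IntermediateField.adjoin K s) E M :=
    ⟨fun c e m => by
      rw [Algebra.smul_def, mul_smul]; rfl⟩
  let d' : Derivation (IntermediateField.adjoin K s) E M :=
    { toFun := d
      map_add' := d.map_add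
      map_smul' := fun c e => by
        rw [Algebra.smul_def, Derivation.leibniz]
        have : d (algebraMap (IntermediateField.adjoin K s) E c) = 0 := hk _ c.2
        rw [this, smul_zero, add_zero]
        rfl
      map_one_eq_zero' := by simp
      leibniz' := fun x y => d.leibniz x y }
  have hint := (mem_cl_iff.1 ha).isIntegral
  have h1 := d'.map_aeval (minpoly (IntermediateField.adjoin K s) a) a
  rw [minpoly.aeval, map_zero] at h1
  have hsep : (minpoly (IntermediateField.adjoin K s) a).Separable := by
    have : CharZero (IntermediateField.adjoin K s) := charZero_of_injective_algebraMap
      (algebraMap K _).injective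
    exact (minpoly.irreducible hint).separable
  have h2 := hsep.aeval_derivative_ne_zero (minpoly.aeval _ a)
  exact (smul_eq_zero.1 h1.symm).resolve_left h2

/-- A derivation mapping `s` into the relative algebraic closure of `K(s)` preserves that
closure: differentiate the minimal polynomial of an element. -/
theorem der_mem_cl [CharZero K] (d : Derivation K E E) {s : Set E} (hs : ∀ a ∈ s, d a ∈ cl K s)
    {a : E} (ha : a ∈ cl K s) : d a ∈ cl K s := by
  have hle : IntermediateField.adjoin K s ≤ cl K s := adjoin_le_cl (subset_cl s)
  have hk : ∀ c ∈ IntermediateField.adjoin K s, d c ∈ cl K s := fun c hc => by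
    induction hc using IntermediateField.adjoin_induction with
    | mem x hx => exact hs x hx
    | algebraMap x => simp
    | add x y _ _ hx hy => rw [map_add]; exact add_mem hx hy
    | inv x hx' hx =>
      rw [Derivation.leibniz_inv, smul_eq_mul]
      exact mul_mem (neg_mem (pow_mem (inv_mem (hle hx')) 2)) hx
    | mul x y hx' hy' hx hy =>
      rw [Derivation.leibniz, smul_eq_mul, smul_eq_mul]
      exact add_mem (mul_mem (hle hx') hy) (mul_mem (hle hy') hx)
  have hae : ∀ p : Polynomial (IntermediateField.adjoin K s), Polynomial.aeval a p ∈ cl K s :=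
    fun p => by
      rw [Polynomial.aeval_eq_sum_range]
      refine sum_mem fun i _ => ?_
      rw [Algebra.smul_def]
      exact mul_mem (hle (p.coeff i).2) (pow_mem ha i)
  -- the chain rule: `d (p(a))` is `p'(a) * d a` plus the value at `a` of `p` with `d` applied to
  -- its coefficients
  have key : ∀ p : Polynomial (IntermediateField.adjoin K s), ∃ r ∈ cl K s,
      d (Polynomial.aeval a p) = r + Polynomial.aeval a (Polynomial.derivative p) * d a :=
    fun p => by
      induction p using Polynomial.induction_on' with
      | add p q hp hq =>
        obtain ⟨r, hr, h1⟩ := hp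
        obtain ⟨r', hr', h2⟩ := hq
        exact ⟨r + r', add_mem hr hr', by simp only [map_add, h1, h2]; ring⟩
      | monomial n c =>
        refine ⟨a ^ n * d c, mul_mem (pow_mem ha n) (hk _ c.2), ?_⟩
        rw [Polynomial.derivative_monomial, Polynomial.aeval_monomial, Polynomial.aeval_monomial,
          Derivation.leibniz, Derivation.leibniz_pow]
        simp only [smul_eq_mul, nsmul_eq_mul, map_mul, map_natCast]
        rw [add_comm, ← mul_assoc, ← mul_assoc]
        rfl
  have hint := (mem_cl_iff.1 ha).isIntegral
  obtain ⟨r, hr, h1⟩ := key (minpoly (IntermediateField.adjoin K s) a)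
  rw [minpoly.aeval, map_zero] at h1
  have hsep : (minpoly (IntermediateField.adjoin K s) a).Separable := by
    have : CharZero (IntermediateField.adjoin K s) := charZero_of_injective_algebraMap
      (algebraMap K _).injective
    exact (minpoly.irreducible hint).separable
  have h2 := hsep.aeval_derivative_ne_zero (minpoly.aeval _ a)
  have h3 : d a = -r / Polynomial.aeval a
      (Polynomial.derivative (minpoly (IntermediateField.adjoin K s) a)) := by
    rw [eq_div_iff h2]; linear_combination -h1
  rw [h3]
  exact div_mem (neg_mem hr) (hae _)

/-- In characteristic zero a derivation extends to any algebraic extension `Ω / E`, since `Ω` is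
then formally étale over `E`. -/
theorem exists_der_extend [CharZero K] {Ω : Type} [Field Ω] [Algebra K Ω] [Algebra E Ω]
    [IsScalarTower K E Ω] [Algebra.IsAlgebraic E Ω] (d : Derivation K E E) :
    ∃ D : Derivation K Ω Ω, ∀ a, D (algebraMap E Ω a) = algebraMap E Ω (d a) := by
  have : CharZero E := charZero_of_injective_algebraMap (algebraMap K E).injective
  have : Algebra.FormallyEtale E Ω := Algebra.FormallyEtale.of_isSeparable _ _
  let l : Ω[E⁄K] →ₗ[E] Ω := (Algebra.linearMap E Ω) ∘ₗ d.liftKaehlerDifferential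
  let L : Ω[Ω⁄K] →ₗ[Ω] Ω := (LinearMap.liftBaseChange Ω l) ∘ₗ
    (KaehlerDifferential.tensorKaehlerEquivOfFormallyEtale K E Ω).symm.toLinearMap
  refine ⟨L.compDer (KaehlerDifferential.D K Ω), fun a => ?_⟩
  simp [L, l, KaehlerDifferential.tensorKaehlerEquivOfFormallyEtale_symm_D_algebraMap]

/-- Derivations `d` of `E` and `D` of `Ω` that are intertwined by the embedding `ψ` on `s` are
intertwined on everything algebraic over `K(s)`: the difference `D ∘ ψ - ψ ∘ d` is a derivation of
`E` with values in `Ω`, viewed as an `E`-module through `ψ`. -/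
theorem der_comp_eq [CharZero K] {Ω : Type} [Field Ω] [Algebra K Ω] (ψ : E →ₐ[K] Ω)
    (D : Derivation K Ω Ω) (d : Derivation K E E) {s : Set E} (hs : ∀ a ∈ s, D (ψ a) = ψ (d a))
    {a : E} (ha : a ∈ cl K s) : D (ψ a) = ψ (d a) := by
  let : Algebra E Ω := ψ.toRingHom.toAlgebra
  have : IsScalarTower K E Ω := .of_algebraMap_eq fun x => (ψ.commutes x).symm
  let δ : Derivation K E Ω :=
    { toFun := fun e => D (ψ e) - ψ (d e)
      map_add' := fun x y => by simp only [map_add]; ring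
      map_smul' := fun c x => by simp [smul_sub]
      map_one_eq_zero' := by simp
      leibniz' := fun x y => by
        have hsm : ∀ (e : E) (w : Ω), e • w = ψ e * w := fun e w => Algebra.smul_def e w
        simp only [LinearMap.coe_mk, AddHom.coe_mk, map_mul, Derivation.leibniz, map_add,
          smul_eq_mul, hsm]
        ring }
  exact sub_eq_zero.1 (der_eq_zero δ (s := s) (fun b hb => sub_eq_zero.2 (hs b hb)) ha)

end Closure

/-! ### Transport between two zeros of an irreducible polynomial -/

section Gauss

/-- By Gauss's lemma, an irreducible polynomial of positive degree over a factorial domain divides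
every polynomial with which it shares a root in an overfield. -/
theorem dvd_of_common_root {R E : Type} [CommRing R] [IsDomain R] [UniqueFactorizationMonoid R]
    [Field E] (i : R →+* E) (hi : Function.Injective i) {f G : Polynomial R} (hf : Irreducible f)
    (hdeg : f.natDegree ≠ 0) {a : E} (hfa : f.eval₂ i a = 0) (hGa : G.eval₂ i a = 0) : f ∣ G := by
  classical
  let : StrongNormalizationMonoid R := UniqueFactorizationMonoid.strongNormalizationMonoid
  let : NormalizedGCDMonoid R := UniqueFactorizationMonoid.toNormalizedGCDMonoid R
  have hprim : f.IsPrimitive := hf.isPrimitive hdeg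
  have hirr := (hprim.irreducible_iff_irreducible_map_fraction_map (K := FractionRing R)).1 hf
  let j : FractionRing R →+* E := IsFractionRing.lift hi
  have hj : ∀ p : Polynomial R, (p.map (algebraMap R (FractionRing R))).eval₂ j a = p.eval₂ i a :=
    fun p => by
      rw [Polynomial.eval₂_map]
      congr 1
      ext r
      exact IsFractionRing.lift_algebraMap hi r
  refine hprim.dvd_of_fraction_map_dvd_fraction_map (K := FractionRing R) ?_
  by_contra hnd
  obtain ⟨p, q, hpq⟩ := (hirr.coprime_iff_not_dvd).2 hnd
  have := congrArg (Polynomial.eval₂ j a) hpq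
  rw [Polynomial.eval₂_add, Polynomial.eval₂_mul, Polynomial.eval₂_mul, hj, hj, hfa, hGa] at this
  simp at this

theorem aeval_cons_eq {K E : Type} [Field K] [Field E] [Algebra K E] {n : ℕ} (y : E) (t : Fin n → E)
    (P : MvPolynomial (Fin (n + 1)) K) :
    aeval (Fin.cons y t : Fin (n + 1) → E) P =
      (finSuccEquiv K n P).eval₂ (aeval t : MvPolynomial (Fin n) K →ₐ[K] E).toRingHom y := by
  induction P using MvPolynomial.induction_on with
  | C a => simp [finSuccEquiv_apply]
  | add p q hp hq => rw [map_add, map_add, Polynomial.eval₂_add, hp, hq]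
  | mul_X p i hp =>
    rw [map_mul, map_mul, Polynomial.eval₂_mul, hp]
    congr 1
    refine Fin.cases ?_ (fun j => ?_) i
    · rw [finSuccEquiv_X_zero]; simp
    · rw [finSuccEquiv_X_succ]; simp

/-- The polynomials vanishing at `(y, t)`, with `t` algebraically independent, are the multiples of
any irreducible one among them that involves the first variable. -/
theorem dvd_of_aeval_eq_zero {K E : Type} [Field K] [Field E] [Algebra K E] {n : ℕ}
    {F G : MvPolynomial (Fin (n + 1)) K} (hF : Irreducible F) (hdeg : F.degreeOf 0 ≠ 0)
    {y : E} {t : Fin n → E} (ht : AlgebraicIndependent K t)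
    (hFy : aeval (Fin.cons y t : Fin (n + 1) → E) F = 0)
    (hGy : aeval (Fin.cons y t : Fin (n + 1) → E) G = 0) : F ∣ G := by
  rw [← map_dvd_iff (finSuccEquiv K n)]
  rw [aeval_cons_eq] at hFy hGy
  refine dvd_of_common_root _ ht ((MulEquiv.irreducible_iff (finSuccEquiv K n)).2 hF) ?_ hFy hGy
  rwa [natDegree_finSuccEquiv]

/-- If `(y, t)` and `(y', t')` are zeros of the same irreducible polynomial `F`, then
`(y, t) ↦ (y', t')` extends to an embedding of `L` into an algebraically closed overfield: the
`K`-algebras generated by the two points are both `K[X] / (F)`, and `L` is algebraic over the first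
one. -/
theorem exists_algHom {K L Ω : Type} [Field K] [Field L] [Field Ω] [Algebra K L] [Algebra K Ω]
    [Algebra L Ω] [IsScalarTower K L Ω] [IsAlgClosed Ω] {n : ℕ}
    {F : MvPolynomial (Fin (n + 1)) K} (hF : Irreducible F) (hdeg : F.degreeOf 0 ≠ 0)
    {y y' : L} {t t' : Fin n → L} (ht : IsTranscendenceBasis K t) (ht' : AlgebraicIndependent K t')
    (hy : aeval (Fin.cons y t : Fin (n + 1) → L) F = 0)
    (hy' : aeval (Fin.cons y' t' : Fin (n + 1) → L) F = 0) :
    ∃ ψ : L →ₐ[K] Ω, ψ y = algebraMap L Ω y' ∧ ∀ i, ψ (t i) = algebraMap L Ω (t' i) := by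
  let e : MvPolynomial (Fin (n + 1)) K →ₐ[K] L := aeval (Fin.cons y t : Fin (n + 1) → L)
  let e' : MvPolynomial (Fin (n + 1)) K →ₐ[K] Ω :=
    (IsScalarTower.toAlgHom K L Ω).comp (aeval (Fin.cons y' t' : Fin (n + 1) → L))
  have hker : ∀ G, e G = 0 ↔ e' G = 0 := fun G => by
    have h' : e' G = 0 ↔ aeval (Fin.cons y' t' : Fin (n + 1) → L) G = 0 :=
      map_eq_zero (algebraMap L Ω)
    rw [h']
    constructor
    · intro h
      obtain ⟨H, rfl⟩ := dvd_of_aeval_eq_zero hF hdeg ht.1 hy h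
      rw [map_mul, hy', zero_mul]
    · intro h
      obtain ⟨H, rfl⟩ := dvd_of_aeval_eq_zero hF hdeg ht' hy' h
      change aeval _ (F * H) = 0
      rw [map_mul, hy, zero_mul]
  let R := MvPolynomial (Fin (n + 1)) K ⧸ RingHom.ker e
  let E : R →ₐ[K] L := Ideal.Quotient.liftₐ _ e fun a ha => ha
  let E' : R →ₐ[K] Ω := Ideal.Quotient.liftₐ _ e' fun a ha => (hker a).1 ha
  have hE : Function.Injective E := RingHom.kerLift_injective e.toRingHom
  have hE' : Function.Injective E' := by
    rw [injective_iff_map_eq_zero]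
    intro a ha
    obtain ⟨G, rfl⟩ := Ideal.Quotient.mk_surjective a
    exact Ideal.Quotient.eq_zero_iff_mem.2 ((hker G).2 ha)
  let : Algebra R L := E.toRingHom.toAlgebra
  let : Algebra R Ω := E'.toRingHom.toAlgebra
  have : IsScalarTower K R L := .of_algebraMap_eq fun c => (E.commutes c).symm
  have : IsScalarTower K R Ω := .of_algebraMap_eq fun c => (E'.commutes c).symm
  have : IsDomain R := hE.isDomain E.toRingHom
  have : FaithfulSMul R L := (faithfulSMul_iff_algebraMap_injective R L).2 hE
  have : FaithfulSMul R Ω := (faithfulSMul_iff_algebraMap_injective R Ω).2 hE'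
  have : Algebra.IsAlgebraic R L := by
    have h1 := ht.isAlgebraic
    refine ⟨fun a => ?_⟩
    have ha := h1.isAlgebraic a
    have hle : Algebra.adjoin K (Set.range t) ≤ E.range := by
      rw [Algebra.adjoin_le_iff]
      rintro _ ⟨i, rfl⟩
      exact ⟨Ideal.Quotient.mk _ (X i.succ), by
        change aeval _ (X i.succ) = _
        simp⟩
    let φ : Algebra.adjoin K (Set.range t) →ₐ[K] R :=
      (AlgEquiv.ofInjective E hE).symm.toAlgHom.comp (Subalgebra.inclusion hle)
    have hφ : ∀ c, E (φ c) = c := fun c =>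
      congrArg Subtype.val ((AlgEquiv.ofInjective E hE).apply_symm_apply (Subalgebra.inclusion hle c))
    refine ha.ringHom_of_comp_eq φ (RingHom.id L) (fun c c' hcc => ?_) (RingHom.ext hφ)
    exact Subtype.ext (by rw [← hφ c, ← hφ c', hcc])
  let ψ : L →ₐ[R] Ω := IsAlgClosed.lift
  have hψ : ∀ G, ψ (e G) = e' G := fun G => ψ.commutes (Ideal.Quotient.mk _ G)
  refine ⟨ψ.restrictScalars K, ?_, fun i => ?_⟩
  · have := hψ (X 0)
    simpa [e, e'] using this
  · have := hψ (X i.succ)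
    simpa [e, e'] using this

end Gauss

/-! ### Descent of polynomials -/

section Descent

/-- For fields `k → C → Ω` and `u ∈ Ω` transcendental over `C`, one has `k(u) ∩ C[u] = k[u]`:
if `d ∣ n` in `C[X]`, then `d ∣ n` in `k[X]`. -/
theorem descent {k C Ω : Type} [Field k] [Field C] [Field Ω] (i : k →+* C) (j : C →+* Ω) {u h : Ω}
    (hu : ∀ p : Polynomial C, p.eval₂ j u = 0 → p = 0) {n d : Polynomial k} {m : Polynomial C}
    (hd : d.eval₂ (j.comp i) u ≠ 0) (hn : h = n.eval₂ (j.comp i) u / d.eval₂ (j.comp i) u)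
    (hm : h = m.eval₂ j u) : ∃ q : Polynomial k, h = q.eval₂ (j.comp i) u := by
  have h1 : d.map i * m = n.map i := by
    rw [← sub_eq_zero]
    apply hu
    rw [Polynomial.eval₂_sub, Polynomial.eval₂_mul, Polynomial.eval₂_map, Polynomial.eval₂_map,
      ← hm, hn, mul_div_cancel₀ _ hd, sub_self]
  obtain ⟨q, rfl⟩ := (Polynomial.map_dvd_map' i).1 ⟨m, h1.symm⟩
  refine ⟨q, ?_⟩
  rw [hn, Polynomial.eval₂_mul, mul_div_cancel_left₀ _ hd]

end Descent

/-! ### Comparison of two realizations -/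

section Main

variable {L : Type} [Field L] [Algebra K L]

theorem not_mem_cl_of_basis {u u₁ x : L} (hb : IsTranscendenceBasis K ![x, u₁, u]) :
    u₁ ∉ cl K {u, x} := by
  have h := hb.1.transcendental_adjoin (s := {0, 2}) (i := 1) (by simp)
  rw [mem_cl_iff']
  have hs : (![x, u₁, u] '' {0, 2} : Set L) = {u, x} := by
    simp [Set.image_insert_eq, Set.pair_comm]
  rw [hs] at h
  exact h

/-- An output `g ∈ K(u, x)` with `∂g/∂x ≠ 0` can be exchanged for the state `x`: it is not
algebraic over `K(u)`, because `∂/∂x` kills `u`. -/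
theorem basis_of_output [CharZero K] {u u₁ x g : L} (hb : IsTranscendenceBasis K ![x, u₁, u])
    {Dx : Derivation K L L} (hDxu : Dx u = 0)
    (hg : g ∈ IntermediateField.adjoin K {u, x}) (hDxg : Dx g ≠ 0) :
    x ∈ cl K {u, g} ∧ IsTranscendenceBasis K ![g, u₁, u] := by
  have hgu : g ∉ cl K {u} := fun h => hDxg (der_eq_zero Dx (by simpa using hDxu) h)
  have hgx : g ∈ cl K (insert x {u}) := by
    rw [Set.pair_comm]
    exact adjoin_le_cl (subset_cl _) hg
  have hx : x ∈ cl K {u, g} := by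
    rw [Set.pair_comm]
    exact cl_exchange hgx hgu
  refine ⟨hx, ?_⟩
  have hr : Set.range ![g, u₁, u] = {g, u₁, u} := by
    simp only [Matrix.range_cons, Matrix.range_empty, Set.union_empty, Set.singleton_union]
  have hr' : Set.range ![x, u₁, u] = {x, u₁, u} := by
    simp only [Matrix.range_cons, Matrix.range_empty, Set.union_empty, Set.singleton_union]
  have htop : ∀ a : L, a ∈ cl K {g, u₁, u} := fun a => by
    have h1 : a ∈ cl K {x, u₁, u} := by
      rw [mem_cl_iff', ← hr']
      exact hb.isAlgebraic.isAlgebraic a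
    refine cl_le ?_ h1
    rintro b (rfl | rfl | rfl)
    · exact cl_le (K := K) (fun c hc => subset_cl _ (by
        rcases hc with rfl | rfl <;> simp)) hx
    · exact subset_cl _ (by simp)
    · exact subset_cl _ (by simp)
  have : Algebra.IsAlgebraic (Algebra.adjoin K (Set.range ![g, u₁, u])) L :=
    ⟨fun a => by rw [hr]; exact mem_cl_iff'.1 (htop a)⟩
  exact Algebra.IsAlgebraic.isTranscendenceBasis_of_le_trdeg_of_finite K _
    hb.cardinalMk_eq_trdeg.le

/-- An element of `K(u, x)` that is a polynomial in `u` with coefficients algebraic over `K(x)` is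
a polynomial in `u` with coefficients in `K(x)`. -/
theorem exists_poly_of_mem {Ω : Type} [Field Ω] [Algebra K Ω] (ι : L →ₐ[K] Ω) {u x : L}
    (hu : ι u ∉ cl K {ι x}) {h : L} (hh : h ∈ IntermediateField.adjoin K {u, x})
    {m : Polynomial (cl K {ι x})} (hm : ι h = Polynomial.aeval (ι u) m) :
    ∃ q : Polynomial (IntermediateField.adjoin K {x}), h = Polynomial.aeval u q := by
  have hmem : ∀ c : IntermediateField.adjoin K {x}, ι c ∈ cl K {ι x} := fun c => by
    have h1 : (c : L) ∈ cl K {x} := adjoin_le_cl (subset_cl _) c.2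
    simpa using (map_mem_cl_iff ι).2 h1
  let i : IntermediateField.adjoin K {x} →+* cl K {ι x} :=
    ((ι.toRingHom.comp (algebraMap (IntermediateField.adjoin K {x}) L))).codRestrict
      (cl K {ι x}).toSubring hmem
  let j : cl K {ι x} →+* Ω := algebraMap _ _
  have hij : ∀ p : Polynomial (IntermediateField.adjoin K {x}),
      p.eval₂ (j.comp i) (ι u) = ι (Polynomial.aeval u p) := fun p =>
    (Polynomial.hom_eval₂ p (algebraMap _ L) ι.toRingHom u).symm
  have hut : ∀ p : Polynomial (cl K {ι x}), p.eval₂ j (ι u) = 0 → p = 0 := by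
    intro p hp
    by_contra hne
    have h1 : IsAlgebraic (cl K {ι x}) (ι u) := ⟨p, hne, hp⟩
    have h2 : ι u ∈ cl K (cl K {ι x} : Set Ω) := by
      rw [mem_cl_iff]
      refine h1.ringHom_of_comp_eq (Subring.inclusion (S := (cl K {ι x}).toSubring)
        (T := (IntermediateField.adjoin K (cl K {ι x} : Set Ω)).toSubring)
        (fun c hc => IntermediateField.subset_adjoin K _ hc)) (RingHom.id Ω)
        (Set.inclusion_injective (IntermediateField.subset_adjoin K _)) rfl
    exact hu (cl_le subset_rfl h2)
  have hmem' : h ∈ IntermediateField.adjoin (IntermediateField.adjoin K {x}) {u} := by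
    have := IntermediateField.adjoin_adjoin_left K {x} {u}
    rw [← IntermediateField.mem_restrictScalars K, this]
    rwa [Set.singleton_union, Set.pair_comm]
  obtain ⟨r, s, hrs⟩ := (IntermediateField.mem_adjoin_simple_iff _ h).1 hmem'
  by_cases hs : Polynomial.aeval u s = 0
  · exact ⟨0, by rw [hrs, hs]; simp⟩
  have hs' : ι (Polynomial.aeval u s) ≠ 0 := (map_ne_zero ι).2 hs
  obtain ⟨q, hq⟩ := descent i j hut (n := r) (d := s) (m := m) (h := ι h)
    (by rwa [hij]) (by rw [hij, hij, hrs, map_div₀]) hm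
  rw [hij] at hq
  exact ⟨q, ι.injective hq⟩

/-- The comparison of two realizations in a field `L` with transcendence basis `x, u₁, u`, where
polynomial dependence on `u` means membership in `K(x)[u]`.  The variables of `F` are in the order
`y₁, y, u₁, u`, so that `F` is a polynomial in its first variable over the ring in the others. -/
theorem realization_comparison [CharZero K] {u u₁ x : L} (hb : IsTranscendenceBasis K ![x, u₁, u]) (Dx Du : Derivation K L L)
    (hDxu : Dx u = 0) (hDxu₁ : Dx u₁ = 0) (hDxx : Dx x = 1)
    (hDuu : Du u = 1) (hDuu₁ : Du u₁ = 0) (hDux : Du x = 0)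
    (F : MvPolynomial (Fin 4) K) (hF : Irreducible F) (hdeg : F.degreeOf 0 ≠ 0)
    {f₁ g₁ f g : L}
    (hf₁ : f₁ ∈ IntermediateField.adjoin K {u, x}) (hg₁ : g₁ ∈ IntermediateField.adjoin K {u, x})
    (hDg₁ : Dx g₁ ≠ 0)
    (hF₁ : aeval (Fin.cons (Dx g₁ * f₁ + Du g₁ * u₁) ![g₁, u₁, u] : Fin 4 → L) F = 0)
    (hf : f ∈ IntermediateField.adjoin K {u, x}) (hg : g ∈ IntermediateField.adjoin K {u, x})
    (hDg : Dx g ≠ 0)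
    (hFg : aeval (Fin.cons (Dx g * f + Du g * u₁) ![g, u₁, u] : Fin 4 → L) F = 0)
    (hpf₁ : ∃ q : Polynomial (IntermediateField.adjoin K {x}), f₁ = Polynomial.aeval u q)
    (hpg₁ : ∃ q : Polynomial (IntermediateField.adjoin K {x}), g₁ = Polynomial.aeval u q) :
    (∃ q : Polynomial (IntermediateField.adjoin K {x}), f = Polynomial.aeval u q) ∧
    (∃ q : Polynomial (IntermediateField.adjoin K {x}), g = Polynomial.aeval u q) := by
  obtain ⟨hxg₁, hb₁⟩ := basis_of_output hb hDxu hg₁ hDg₁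
  obtain ⟨hxg, hbg⟩ := basis_of_output hb hDxu hg hDg
  obtain ⟨Ω, _, _, _, _, _, _⟩ : ∃ (Ω : Type) (_ : Field Ω) (_ : Algebra K Ω) (_ : Algebra L Ω),
      IsScalarTower K L Ω ∧ IsAlgClosed Ω ∧ Algebra.IsAlgebraic L Ω :=
    ⟨AlgebraicClosure L, inferInstance, inferInstance, inferInstance, inferInstance,
      inferInstance, inferInstance⟩
  let ι : L →ₐ[K] Ω := IsScalarTower.toAlgHom K L Ω
  obtain ⟨ψ, hψy, hψ⟩ := exists_algHom (Ω := Ω) hF hdeg hb₁ hbg.1 hF₁ hFg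
  have hψg : ψ g₁ = ι g := hψ 0
  have hψu₁ : ψ u₁ = ι u₁ := hψ 1
  have hψu : ψ u = ι u := hψ 2
  replace hψy : ψ (Dx g₁ * f₁ + Du g₁ * u₁) = ι (Dx g * f + Du g * u₁) := hψy
  obtain ⟨Ex, hEx⟩ := exists_der_extend (Ω := Ω) Dx
  obtain ⟨Eu, hEu⟩ := exists_der_extend (Ω := Ω) Du
  replace hEx : ∀ a, Ex (ι a) = ι (Dx a) := hEx
  replace hEu : ∀ a, Eu (ι a) = ι (Du a) := hEu
  clear_value ι
  -- the total derivatives of the two systems are intertwined by `ψ` on `g₁, u₁, u`, hence at `x`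
  have hD : ι f * Ex (ψ x) + ι u₁ * Eu (ψ x) = ψ f₁ := by
    have h := der_comp_eq ψ (ι f • Ex + ι u₁ • Eu) (f₁ • Dx + u₁ • Du)
      (s := {g₁, u₁, u}) ?_ (a := x) ?_
    · simpa [hDxx, hDux] using h
    · rintro a (rfl | rfl | rfl)
      · simp only [Derivation.add_apply, Derivation.smul_apply, smul_eq_mul, hψg, hEx, hEu]
        rw [← map_mul, ← map_mul, ← map_add, mul_comm f, mul_comm u₁, ← hψy]
        congr 1
        ring
      · simp [hψu₁, hEx, hEu, hDxu₁, hDuu₁]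
      · simp [hψu, hEx, hEu, hDxu, hDuu, hψu₁]
    · exact cl_le (K := K) (fun c hc => subset_cl _ (by
        rcases hc with rfl | rfl <;> simp)) hxg₁
  have hιN : ∀ {a : L}, a ∈ IntermediateField.adjoin K {u, x} → ι a ∈ cl K {ι u, ι x} :=
    fun {a} ha => by
      have := (map_mem_cl_iff ι).2 (adjoin_le_cl (K := K) (subset_cl _) ha)
      rwa [Set.image_pair] at this
  have huN : ι u ∈ cl K {ι u, ι x} := subset_cl _ (by simp)
  have hxN : ι x ∈ cl K {ι u, ι x} := subset_cl _ (by simp)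
  have hzN : ψ x ∈ cl K {ι u, ι x} := by
    have h1 := (map_mem_cl_iff ψ).2 hxg₁
    rw [Set.image_pair, hψu, hψg] at h1
    refine cl_le ?_ h1
    rintro b (rfl | rfl)
    · exact huN
    · exact hιN hg
  have hψN : ∀ {a : L}, a ∈ IntermediateField.adjoin K {u, x} → ψ a ∈ cl K {ι u, ψ x} :=
    fun {a} ha => by
      have := (map_mem_cl_iff ψ).2 (adjoin_le_cl (K := K) (subset_cl _) ha)
      rwa [Set.image_pair, hψu] at this
  have hwN : ψ f₁ ∈ cl K {ι u, ι x} := by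
    refine cl_le ?_ (hψN hf₁)
    rintro b (rfl | rfl)
    · exact huN
    · exact hzN
  have hExN : Ex (ψ x) ∈ cl K {ι u, ι x} := der_mem_cl Ex (by
    rintro b (rfl | rfl)
    · simp [hEx, hDxu]
    · simp [hEx, hDxx]) hzN
  have hEuN : Eu (ψ x) ∈ cl K {ι u, ι x} := der_mem_cl Eu (by
    rintro b (rfl | rfl)
    · simp [hEu, hDuu]
    · simp [hEu, hDux]) hzN
  have hu₁ : ι u₁ ∉ cl K {ι u, ι x} := by
    have := mt (map_mem_cl_iff ι).1 (not_mem_cl_of_basis hb)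
    rwa [Set.image_pair] at this
  -- otherwise the relation `hD` could be solved for `u₁`
  have hEuz : Eu (ψ x) = 0 := by
    by_contra hne
    apply hu₁
    have : ι u₁ = (ψ f₁ - ι f * Ex (ψ x)) / Eu (ψ x) := by
      rw [eq_div_iff hne]; linear_combination hD
    rw [this]
    exact div_mem (sub_mem hwN (mul_mem (hιN hf) hExN)) hEuN
  have huC : ι u ∉ cl K {ι x} := fun h => by
    have := der_eq_zero Eu (s := {ι x}) (by simp [hEu, hDux]) h
    simp [hEu, hDuu] at this
  -- otherwise `u` would be algebraic over `K(ψ x, x)`, on which `Eu` vanishes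
  have hzC : ψ x ∈ cl K {ι x} := by
    by_contra hne
    have h1 := der_eq_zero Eu (s := {ψ x, ι x}) (by
      rintro b (rfl | rfl)
      · exact hEuz
      · simp [hEu, hDux]) (cl_exchange hzN hne)
    simp [hEu, hDuu] at h1
  have hExC : Ex (ψ x) ∈ cl K {ι x} := der_mem_cl Ex (by
    rintro b rfl
    simp [hEx, hDxx]) hzC
  -- otherwise `Ex` would vanish at `ψ g₁ = g`
  have hExz : Ex (ψ x) ≠ 0 := fun h0 => by
    have h1 := der_eq_zero Ex (s := {ι u, ψ x}) (by
      rintro b (rfl | rfl)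
      · simp [hEx, hDxu]
      · exact h0) (hψN hg₁)
    rw [hψg, hEx] at h1
    exact hDg ((map_eq_zero ι).1 h1)
  have hψC : ∀ c : IntermediateField.adjoin K {x}, ψ c ∈ cl K {ι x} := fun c => by
    have h1 := (map_mem_cl_iff ψ).2 (adjoin_le_cl (K := K) (subset_cl _) c.2)
    rw [Set.image_singleton] at h1
    refine cl_le ?_ h1
    rintro b rfl
    exact hzC
  let i : IntermediateField.adjoin K {x} →+* cl K {ι x} :=
    ((ψ.toRingHom.comp (algebraMap (IntermediateField.adjoin K {x}) L))).codRestrict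
      (cl K {ι x}).toSubring hψC
  have hi : ∀ p : Polynomial (IntermediateField.adjoin K {x}),
      ψ (Polynomial.aeval u p) = Polynomial.aeval (ι u) (p.map i) := fun p => by
    rw [Polynomial.aeval_def (ι u), Polynomial.eval₂_map, ← hψu]
    exact Polynomial.hom_eval₂ p (algebraMap _ L) ψ.toRingHom u
  obtain ⟨p, hp⟩ := hpf₁
  obtain ⟨q, hq⟩ := hpg₁
  constructor
  · refine exists_poly_of_mem ι huC hf
      (m := Polynomial.C (⟨Ex (ψ x), hExC⟩⁻¹ : cl K {ι x}) * p.map i) ?_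
    rw [map_mul, ← hi, ← hp, Polynomial.aeval_C, map_inv₀]
    change ι f = (Ex (ψ x))⁻¹ * ψ f₁
    rw [← hD, hEuz]
    field_simp
    ring
  · exact exists_poly_of_mem ι huC hg (m := q.map i) (by rw [← hi, ← hq, hψg])

end Main

/-! ### Polynomial dependence on the input in `K(u, u₁, x)` -/

section Polynomials

theorem isTranscendenceBasis_xL : IsTranscendenceBasis K ![xL K, u₁L K, uL K] := by
  have : Algebra.IsAlgebraic (MvPolynomial (Fin 3) K) (LL K) :=
    IsLocalization.isAlgebraic _ (nonZeroDivisors (MvPolynomial (Fin 3) K))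
  have h := ((IsTranscendenceBasis.mvPolynomial (Fin 3) K).algebraMap_comp
    (A := LL K)).comp_equiv (Fin.revPerm : Equiv.Perm (Fin 3))
  convert h using 1
  ext i
  fin_cases i <;> rfl

theorem exists_poly_of_mem_KpolyUX {p : LL K} (hp : p ∈ KpolyUX K) :
    ∃ q : Polynomial (IntermediateField.adjoin K {xL K}), p = Polynomial.aeval (uL K) q := by
  induction hp using Algebra.adjoin_induction with
  | mem a ha =>
    rcases ha with rfl | rfl
    · exact ⟨Polynomial.X, by simp⟩
    · exact ⟨Polynomial.C (IntermediateField.AdjoinSimple.gen K (xL K)), by simp⟩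
  | algebraMap c => exact ⟨Polynomial.C (algebraMap _ _ c), by simp⟩
  | add a b _ _ ha hb =>
    obtain ⟨q, rfl⟩ := ha
    obtain ⟨r, rfl⟩ := hb
    exact ⟨q + r, by simp⟩
  | mul a b _ _ ha hb =>
    obtain ⟨q, rfl⟩ := ha
    obtain ⟨r, rfl⟩ := hb
    exact ⟨q * r, by simp⟩

/-- The localization of `K[u, x]` at `K[x] ∖ {0}` is `K(x)[u]`. -/
theorem dependsPolynomiallyOnU_iff {h : LL K} : DependsPolynomiallyOnU K h ↔
    ∃ q : Polynomial (IntermediateField.adjoin K {xL K}), h = Polynomial.aeval (uL K) q := by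
  have hle : Algebra.adjoin K {xL K} ≤ KpolyUX K := Algebra.adjoin_mono (by simp)
  constructor
  · rintro ⟨p, hp, q, hq, -, rfl⟩
    obtain ⟨P, rfl⟩ := exists_poly_of_mem_KpolyUX hp
    let c : IntermediateField.adjoin K {xL K} :=
      ⟨q, IntermediateField.algebra_adjoin_le_adjoin K _ hq⟩
    refine ⟨Polynomial.C c⁻¹ * P, ?_⟩
    rw [map_mul, Polynomial.aeval_C, map_inv₀, div_eq_inv_mul]
    rfl
  · rintro ⟨q, rfl⟩
    induction q using Polynomial.induction_on' with
    | add q r hq hr =>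
      obtain ⟨p₁, hp₁, q₁, hq₁, h₁, e₁⟩ := hq
      obtain ⟨p₂, hp₂, q₂, hq₂, h₂, e₂⟩ := hr
      refine ⟨p₁ * q₂ + q₁ * p₂, add_mem (mul_mem hp₁ (hle hq₂)) (mul_mem (hle hq₁) hp₂),
        q₁ * q₂, mul_mem hq₁ hq₂, mul_ne_zero h₁ h₂, ?_⟩
      rw [map_add, e₁, e₂, div_add_div _ _ h₁ h₂]
    | monomial n c =>
      obtain ⟨r, s, hc⟩ := (IntermediateField.mem_adjoin_simple_iff K (c : LL K)).1 c.2
      have hr : ∀ r : Polynomial K, Polynomial.aeval (xL K) r ∈ Algebra.adjoin K {xL K} :=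
        fun r => Polynomial.aeval_mem_adjoin_singleton K _
      have hu : uL K ∈ KpolyUX K := Algebra.subset_adjoin (by simp)
      have hm : Polynomial.aeval (uL K) (Polynomial.monomial n c) =
          Polynomial.aeval (xL K) r / Polynomial.aeval (xL K) s * uL K ^ n := by
        rw [Polynomial.aeval_monomial, ← hc]
        rfl
      -- a vanishing denominator makes the quotient `0` by convention
      by_cases hs : Polynomial.aeval (xL K) s = 0
      · exact ⟨0, zero_mem _, 1, one_mem _, one_ne_zero, by rw [hm, hs]; simp⟩
      · exact ⟨Polynomial.aeval (xL K) r * uL K ^ n, mul_mem (hle (hr r)) (pow_mem hu n), _, hr s,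
          hs, by rw [hm]; ring⟩

end Polynomials

/-- **Lemma 3.3 (polynomial dependence on the input is intrinsic).** Fix an irreducible
polynomial `F ∈ K[u,u₁,y,y₁]` with positive degree in `y₁`, over an algebraically closed
field `K` of characteristic zero.  If `F` admits one rational realization `(f₁,g₁)` in
which `f₁` and `g₁` depend polynomially on `u`, then in every rational realization
`(f,g)` of `F` both `f` and `g` depend polynomially on `u`. -/
theorem dependsPolynomiallyOnU_of_realization
    {K : Type} [Field K] [IsAlgClosed K] [CharZero K]
    (Dx Du : Derivation K (LL K) (LL K))
    (hDxu : Dx (uL K) = 0) (hDxu₁ : Dx (u₁L K) = 0) (hDxx : Dx (xL K) = 1)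
    (hDuu : Du (uL K) = 1) (hDuu₁ : Du (u₁L K) = 0) (hDux : Du (xL K) = 0)
    (F : MvPolynomial (Fin 4) K) (hFirr : Irreducible F) (hFdeg : 0 < F.degreeOf 3)
    (f₁ g₁ : LL K) (h₁ : IsRealization Dx Du F f₁ g₁)
    (hf₁ : DependsPolynomiallyOnU K f₁) (hg₁ : DependsPolynomiallyOnU K g₁) :
    ∀ f g : LL K, IsRealization Dx Du F f g →
      DependsPolynomiallyOnU K f ∧ DependsPolynomiallyOnU K g := by
  -- reversing the order of the variables of `F` puts `y₁` first
  have hFirr' : Irreducible (rename Fin.rev F) :=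
    (MulEquiv.irreducible_iff (renameEquiv K (Fin.revPerm : Equiv.Perm (Fin 4)))).2 hFirr
  have hdeg : (rename Fin.rev F).degreeOf 0 ≠ 0 := by
    have := degreeOf_rename_of_injective (p := F) Fin.rev_injective 3
    rw [show (0 : Fin 4) = Fin.rev 3 from rfl, this]
    exact hFdeg.ne'
  have hF : ∀ {f g : LL K}, IsRealization Dx Du F f g → aeval (Fin.cons (Dx g * f + Du g * u₁L K)
      ![g, u₁L K, uL K] : Fin 4 → LL K) (rename Fin.rev F) = 0 := fun {f g} h => by
    rw [aeval_rename]
    refine Eq.trans ?_ h.2.2.2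
    congr 2
    ext i
    fin_cases i <;> rfl
  intro f g h
  rw [dependsPolynomiallyOnU_iff] at hf₁ hg₁ ⊢
  rw [dependsPolynomiallyOnU_iff]
  have key := realization_comparison (isTranscendenceBasis_xL (K := K)) Dx Du hDxu hDxu₁ hDxx hDuu
    hDuu₁ hDux (rename Fin.rev F) hFirr' hdeg (f₁ := f₁) (g₁ := g₁) (f := f) (g := g)
  exact key h₁.1 h₁.2.1 h₁.2.2.1 (hF h₁) h.1 h.2.1 h.2.2.1 (hF h) hf₁ hg₁
end
end
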